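/- (Marck's theorem.) Let M > a ≥ 0, E, Φ, κ ∈ ℝ, and let x(τ) = (t(τ), r(τ), ϑ(τ), φ(τ)) be a C² curve in the Boyer–Lindquist chart of the Kerr metric on an interval I, along which sin ϑ > 0, Δ > 0, R > 0, Θ > 0, κ > a²cos²ϑ, and whose velocity satisfies ṫ = [((r²+a²)² − a²Δ sin²ϑ)E − 2MarΦ]/(ΣΔ), φ̇ = [2MarE + ((Δ − a²sin²ϑ)/sin²ϑ)Φ]/(ΣΔ), ṙ = √R/Σ, ϑ̇ = √Θ/Σ, and which satisfies the geodesic equation ẍ^i + ∑_{j,k} Γ^i_{jk}(x)ẋ^jẋ^k = 0. Let e₀, e₁, e₂, e₃ be the orthonormal symmetric frame with Boyer–Lindquist components e₀ = ((r²+a²)/√(ΣΔ), 0, 0, a/√(ΣΔ)), e₁ = (0, √(Δ/Σ), 0, 0), e₂ = (−a sinϑ/√Σ, 0, 0, −1/(√Σ sinϑ)), e₃ = (0, 0, 1/√Σ, 0), and define the coordinate vector fields along x: L₀ := ẋ; L₃ := (κΣ)^{−1/2}[(a cosϑ√R/√Δ)e₀ + (a cosϑ·𝒫/√Δ)e₁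 + (r√Θ)e₂ − (r𝒟)e₃]; L̃₁ := (κΣ)^{−1/2}[(√ϖ·r√R/√Δ)e₀ + (√ϖ·r𝒫/√Δ)e₁ − ((a cosϑ/√ϖ)√Θ)e₂ + ((a cosϑ/√ϖ)𝒟)e₃]; L̃₂ := Σ^{−1/2}[(√ϖ·𝒫/√Δ)e₀ + (√ϖ·√R/√Δ)e₁ + (𝒟/√ϖ)e₂ + (√Θ/√ϖ)e₃]; and L₁ := cos Φ̂(τ)·L̃₁ − sin Φ̂(τ)·L̃₂, L₂ := sin Φ̂(τ)·L̃₁ + cos Φ̂(τ)·L̃₂, where Φ̂ : I → ℝ is any solution of dΦ̂/dτ = (√κ/Σ)[𝒫/(r²+κ) − a sinϑ·𝒟/(κ − a²cos²ϑ)]. Then each of L₀, L₁, L₂, L₃ is parallel propagated along x: dL^i/dτ + ∑_{j,k} Γ^i_{jk}(x)ẋ^j L^k = 0 for all i. -/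

import Mathlib

noncomputable section

/-- Σ := r² + a²cos²ϑ. -/
def Sigk (a r ϑ : ℝ) : ℝ := r ^ 2 + a ^ 2 * Real.cos ϑ ^ 2

/-- Δ := r² − 2Mr + a². -/
def Delk (M a r : ℝ) : ℝ := r ^ 2 - 2 * M * r + a ^ 2

/-- 𝒫 := E(r²+a²) − aΦ. -/
def Pk (a E Φ r : ℝ) : ℝ := E * (r ^ 2 + a ^ 2) - a * Φ

/-- 𝒟 := aE sinϑ − Φ/sinϑ. -/
def Dk (a E Φ ϑ : ℝ) : ℝ := a * E * Real.sin ϑ - Φ / Real.sin ϑ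

/-- R := 𝒫² − Δ(κ+r²). -/
def Rk (M a E Φ κ r : ℝ) : ℝ := Pk a E Φ r ^ 2 - Delk M a r * (κ + r ^ 2)

/-- Θ := κ − a²cos²ϑ − 𝒟². -/
def Thk (a E Φ κ ϑ : ℝ) : ℝ := κ - a ^ 2 * Real.cos ϑ ^ 2 - Dk a E Φ ϑ ^ 2

/-- ϖ := (κ − a²cos²ϑ)/(r²+κ). -/
def piomk (a κ r ϑ : ℝ) : ℝ := (κ - a ^ 2 * Real.cos ϑ ^ 2) / (r ^ 2 + κ)

/-- ϱ := 𝒫² − Δ(κ − a²cos²ϑ). -/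
def vrhok (M a E Φ κ r ϑ : ℝ) : ℝ :=
  Pk a E Φ r ^ 2 - Delk M a r * (κ - a ^ 2 * Real.cos ϑ ^ 2)

/-- ρ := 𝒫² − ΔΘ. -/
def rhok (M a E Φ κ r ϑ : ℝ) : ℝ := Pk a E Φ r ^ 2 - Delk M a r * Thk a E Φ κ ϑ

/-- Minkowski inner product of frame-component 4-tuples:
⟨u,v⟩_η := u⁰v⁰ − u¹v¹ − u²v² − u³v³. -/
def minkInner (u v : Fin 4 → ℝ) : ℝ :=
  u 0 * v 0 - u 1 * v 1 - u 2 * v 2 - u 3 * v 3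

/-- Partial derivative in the i-th coordinate direction of ℝ⁴. -/
def pd (i : Fin 4) (f : (Fin 4 → ℝ) → ℝ) (x : Fin 4 → ℝ) : ℝ :=
  fderiv ℝ f x (Pi.single i 1)

open Real in
/-- The Kerr metric in Boyer–Lindquist coordinates (t,r,ϑ,φ); here r = x 1, ϑ = x 2. -/
def kerrMetric (M a : ℝ) (x : Fin 4 → ℝ) : Matrix (Fin 4) (Fin 4) ℝ :=
  !![(Delk M a (x 1) - a ^ 2 * sin (x 2) ^ 2) / Sigk a (x 1) (x 2), 0, 0,
      2 * M * a * x 1 * sin (x 2) ^ 2 / Sigk a (x 1) (x 2);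
    0, -Sigk a (x 1) (x 2) / Delk M a (x 1), 0, 0;
    0, 0, -Sigk a (x 1) (x 2), 0;
    2 * M * a * x 1 * sin (x 2) ^ 2 / Sigk a (x 1) (x 2), 0, 0,
      -sin (x 2) ^ 2 * ((x 1 ^ 2 + a ^ 2) ^ 2 -
          a ^ 2 * Delk M a (x 1) * sin (x 2) ^ 2) / Sigk a (x 1) (x 2)]

/-- Christoffel symbols of the Kerr metric. -/
def kerrChristoffel (M a : ℝ) (i j k : Fin 4) (x : Fin 4 → ℝ) : ℝ :=
  (1 / 2) * ∑ l, (kerrMetric M a x)⁻¹ i l *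
    (pd j (fun y => kerrMetric M a y l k) x + pd k (fun y => kerrMetric M a y j l) x
      - pd l (fun y => kerrMetric M a y j k) x)

/-- Symmetric-frame vector e₀ (Boyer–Lindquist components). -/
def e0 (M a r ϑ : ℝ) : Fin 4 → ℝ :=
  ![(r ^ 2 + a ^ 2) / Real.sqrt (Sigk a r ϑ * Delk M a r), 0, 0,
    a / Real.sqrt (Sigk a r ϑ * Delk M a r)]

/-- Symmetric-frame vector e₁. -/
def e1 (M a r ϑ : ℝ) : Fin 4 → ℝ :=
  ![0, Real.sqrt (Delk M a r / Sigk a r ϑ), 0, 0]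

/-- Symmetric-frame vector e₂. -/
def e2 (a r ϑ : ℝ) : Fin 4 → ℝ :=
  ![-(a * Real.sin ϑ) / Real.sqrt (Sigk a r ϑ), 0, 0,
    -(1 / (Real.sqrt (Sigk a r ϑ) * Real.sin ϑ))]

/-- Symmetric-frame vector e₃. -/
def e3 (a r ϑ : ℝ) : Fin 4 → ℝ :=
  ![0, 0, 1 / Real.sqrt (Sigk a r ϑ), 0]

/-- The tangent vector L₀ := ẋ along the curve x. -/
def L0vec (x : ℝ → Fin 4 → ℝ) (t : ℝ) : Fin 4 → ℝ :=
  fun i => deriv (fun s => x s i) t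

/-- The Marck vector L₃ along the curve x. -/
def L3vec (M a E Φ κ : ℝ) (x : ℝ → Fin 4 → ℝ) (t : ℝ) : Fin 4 → ℝ :=
  (1 / Real.sqrt (κ * Sigk a (x t 1) (x t 2))) •
    ((a * Real.cos (x t 2) * Real.sqrt (Rk M a E Φ κ (x t 1)) /
        Real.sqrt (Delk M a (x t 1))) • e0 M a (x t 1) (x t 2)
      + (a * Real.cos (x t 2) * Pk a E Φ (x t 1) /
          Real.sqrt (Delk M a (x t 1))) • e1 M a (x t 1) (x t 2)
      + (x t 1 * Real.sqrt (Thk a E Φ κ (x t 2))) • e2 a (x t 1) (x t 2)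
      - (x t 1 * Dk a E Φ (x t 2)) • e3 a (x t 1) (x t 2))

/-- The auxiliary Marck vector L̃₁ along the curve x. -/
def Lt1vec (M a E Φ κ : ℝ) (x : ℝ → Fin 4 → ℝ) (t : ℝ) : Fin 4 → ℝ :=
  (1 / Real.sqrt (κ * Sigk a (x t 1) (x t 2))) •
    ((Real.sqrt (piomk a κ (x t 1) (x t 2)) * x t 1 *
        Real.sqrt (Rk M a E Φ κ (x t 1)) /
          Real.sqrt (Delk M a (x t 1))) • e0 M a (x t 1) (x t 2)
      + (Real.sqrt (piomk a κ (x t 1) (x t 2)) * x t 1 * Pk a E Φ (x t 1) /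
          Real.sqrt (Delk M a (x t 1))) • e1 M a (x t 1) (x t 2)
      - (a * Real.cos (x t 2) / Real.sqrt (piomk a κ (x t 1) (x t 2)) *
          Real.sqrt (Thk a E Φ κ (x t 2))) • e2 a (x t 1) (x t 2)
      + (a * Real.cos (x t 2) / Real.sqrt (piomk a κ (x t 1) (x t 2)) *
          Dk a E Φ (x t 2)) • e3 a (x t 1) (x t 2))

/-- The auxiliary Marck vector L̃₂ along the curve x. -/
def Lt2vec (M a E Φ κ : ℝ) (x : ℝ → Fin 4 → ℝ) (t : ℝ) : Fin 4 → ℝ :=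
  (1 / Real.sqrt (Sigk a (x t 1) (x t 2))) •
    ((Real.sqrt (piomk a κ (x t 1) (x t 2)) * Pk a E Φ (x t 1) /
        Real.sqrt (Delk M a (x t 1))) • e0 M a (x t 1) (x t 2)
      + (Real.sqrt (piomk a κ (x t 1) (x t 2)) *
          Real.sqrt (Rk M a E Φ κ (x t 1)) /
            Real.sqrt (Delk M a (x t 1))) • e1 M a (x t 1) (x t 2)
      + (Dk a E Φ (x t 2) / Real.sqrt (piomk a κ (x t 1) (x t 2))) •
          e2 a (x t 1) (x t 2)
      + (Real.sqrt (Thk a E Φ κ (x t 2)) /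
          Real.sqrt (piomk a κ (x t 1) (x t 2))) • e3 a (x t 1) (x t 2))

/-- The rotated Marck vector L₁. -/
def L1vec (M a E Φ κ : ℝ) (x : ℝ → Fin 4 → ℝ) (Φhat : ℝ → ℝ) (t : ℝ) :
    Fin 4 → ℝ :=
  Real.cos (Φhat t) • Lt1vec M a E Φ κ x t - Real.sin (Φhat t) • Lt2vec M a E Φ κ x t

/-- The rotated Marck vector L₂. -/
def L2vec (M a E Φ κ : ℝ) (x : ℝ → Fin 4 → ℝ) (Φhat : ℝ → ℝ) (t : ℝ) :
    Fin 4 → ℝ :=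
  Real.sin (Φhat t) • Lt1vec M a E Φ κ x t + Real.cos (Φhat t) • Lt2vec M a E Φ κ x t

/-- A vector field L along the curve x is parallel propagated at τ. -/
def ParallelAt (M a : ℝ) (x : ℝ → Fin 4 → ℝ) (L : ℝ → Fin 4 → ℝ) (τ : ℝ) : Prop :=
  ∀ i, deriv (fun t => L t i) τ
    + ∑ j, ∑ k, kerrChristoffel M a i j k (x τ) * deriv (fun t => x t j) τ * L τ k
    = 0


lemma pd_eq (f : (Fin 4 → ℝ) → ℝ) (G : ℝ → ℝ → ℝ) (x : Fin 4 → ℝ) (gr gθ : ℝ)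
    (hf : ∀ y, f y = G (y 1) (y 2))
    (hd : DifferentiableAt ℝ f x)
    (hr : HasDerivAt (fun r => G r (x 2)) gr (x 1))
    (hθ : HasDerivAt (fun t => G (x 1) t) gθ (x 2)) (j : Fin 4) :
    pd j f x = (![0, gr, gθ, 0] : Fin 4 → ℝ) j := by
  have h1 : ∀ j, pd j f x = deriv (fun t : ℝ => f (x + t • Pi.single j 1)) 0 := by
    intro j
    unfold pd
    rw [← hd.lineDeriv_eq_fderiv]
    rfl
  rw [h1]
  simp only [hf]
  fin_cases j
  · simp
  · have : HasDerivAt (fun t : ℝ => G (x 1 + t) (x 2)) gr 0 := by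
      have := HasDerivAt.comp_const_add (f := fun r => G r (x 2)) (x 1) 0 (by simpa using hr)
      simpa using this
    simpa using this.deriv
  · have : HasDerivAt (fun t : ℝ => G (x 1) (x 2 + t)) gθ 0 := by
      have := HasDerivAt.comp_const_add (f := fun r => G (x 1) r) (x 2) 0 (by simpa using hθ)
      simpa using this
    simpa using this.deriv
  · simp

def dGr (a r c s S Δ δ M : ℝ) : Matrix (Fin 4) (Fin 4) ℝ :=
  !![δ/S - (Δ-a^2*s^2)*(2*r)/S^2, 0, 0, 2*M*a*s^2/S - 2*M*a*r*s^2*(2*r)/S^2;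
    0, -(2*r)/Δ + S*δ/Δ^2, 0, 0;
    0, 0, -(2*r), 0;
    2*M*a*s^2/S - 2*M*a*r*s^2*(2*r)/S^2, 0, 0,
     -(s^2*(4*r*(r^2+a^2)-a^2*δ*s^2))/S + s^2*((r^2+a^2)^2-a^2*Δ*s^2)*(2*r)/S^2]

def dGt (a r c s S Δ M : ℝ) : Matrix (Fin 4) (Fin 4) ℝ :=
  !![-(2*a^2*s*c)/S + (Δ-a^2*s^2)*(2*a^2*s*c)/S^2, 0, 0,
      4*M*a*r*s*c/S + 2*M*a*r*s^2*(2*a^2*s*c)/S^2;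
    0, 2*a^2*s*c/Δ, 0, 0;
    0, 0, 2*a^2*s*c, 0;
    4*M*a*r*s*c/S + 2*M*a*r*s^2*(2*a^2*s*c)/S^2, 0, 0,
     -(2*s*c*((r^2+a^2)^2-a^2*Δ*s^2))/S + s^2*(2*a^2*Δ*s*c)/S
       - s^2*((r^2+a^2)^2-a^2*Δ*s^2)*(2*a^2*s*c)/S^2]

lemma Sigk_dr (a r t : ℝ) : HasDerivAt (fun r => Sigk a r t) (2*r) r := by
  unfold Sigk
  have := (hasDerivAt_pow 2 r).add_const (a^2*Real.cos t^2)
  simpa using this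
lemma Sigk_dt (a r t : ℝ) : HasDerivAt (fun t => Sigk a r t) (-(2*a^2*Real.sin t*Real.cos t)) t := by
  unfold Sigk
  have := (((Real.hasDerivAt_cos t).pow 2).const_mul (a^2)).const_add (r^2)
  refine this.congr_deriv ?_
  simp; ring
lemma Delk_dr (M a r : ℝ) : HasDerivAt (fun r => Delk M a r) (2*r-2*M) r := by
  unfold Delk
  have := ((hasDerivAt_pow 2 r).sub ((hasDerivAt_id r).const_mul (2*M))).add_const (a^2)
  refine this.congr_deriv ?_
  simp
lemma sinsq_dt (t : ℝ) : HasDerivAt (fun t => Real.sin t ^ 2) (2*Real.sin t*Real.cos t) t := by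
  refine ((Real.hasDerivAt_sin t).pow 2).congr_deriv ?_
  simp

lemma pd_kerr (M a : ℝ) (x : Fin 4 → ℝ) (hS : Sigk a (x 1) (x 2) ≠ 0) (hΔ : Delk M a (x 1) ≠ 0)
    (j l k : Fin 4) : pd j (fun y => kerrMetric M a y l k) x =
      (![0, dGr a (x 1) (Real.cos (x 2)) (Real.sin (x 2)) (Sigk a (x 1) (x 2)) (Delk M a (x 1))
          (2*x 1-2*M) M l k,
        dGt a (x 1) (Real.cos (x 2)) (Real.sin (x 2)) (Sigk a (x 1) (x 2)) (Delk M a (x 1))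
          M l k, 0] : Fin 4 → ℝ) j := by
  have hx : ∀ i, DifferentiableAt ℝ (fun y : Fin 4 → ℝ => y i) x := fun i => by fun_prop
  have dS : DifferentiableAt ℝ (fun y : Fin 4 → ℝ => Sigk a (y 1) (y 2)) x := by
    unfold Sigk; fun_prop
  have dD : DifferentiableAt ℝ (fun y : Fin 4 → ℝ => Delk M a (y 1)) x := by
    unfold Delk; fun_prop
  have d0 : ∀ j, pd j (fun _ => (0:ℝ)) x = 0 := by intro j; simp [pd]
  have sr := Sigk_dr a (x 1) (x 2)
  have st := Sigk_dt a (x 1) (x 2)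
  have dr := Delk_dr M a (x 1)
  have ss := sinsq_dt (x 2)
  have h00 := pd_eq (fun y => (Delk M a (y 1) - a ^ 2 * Real.sin (y 2) ^ 2) / Sigk a (y 1) (y 2))
    (fun r t => (Delk M a r - a ^ 2 * Real.sin t ^ 2) / Sigk a r t) x _ _ (fun _ => rfl)
    (by fun_prop (disch := assumption)) ((dr.sub_const _).div sr hS)
    (((ss.const_mul (a^2)).const_sub _).div st hS) j
  have h03 := pd_eq (fun y => 2 * M * a * y 1 * Real.sin (y 2) ^ 2 / Sigk a (y 1) (y 2))
    (fun r t => 2 * M * a * r * Real.sin t ^ 2 / Sigk a r t) x _ _ (fun _ => rfl)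
    (by fun_prop (disch := assumption))
    ((((hasDerivAt_id (x 1)).const_mul (2*M*a)).mul_const _).div sr hS)
    ((ss.const_mul (2*M*a*x 1)).div st hS) j
  have h11 := pd_eq (fun y => -Sigk a (y 1) (y 2) / Delk M a (y 1))
    (fun r t => -Sigk a r t / Delk M a r) x _ _ (fun _ => rfl)
    (by fun_prop (disch := assumption)) (sr.neg.div dr hΔ) (st.neg.div_const _) j
  have h22 := pd_eq (fun y => -Sigk a (y 1) (y 2))
    (fun r t => -Sigk a r t) x _ _ (fun _ => rfl)
    (by fun_prop (disch := assumption)) sr.neg st.neg j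
  have h33 := pd_eq (fun y => -Real.sin (y 2) ^ 2 * ((y 1 ^ 2 + a ^ 2) ^ 2 -
          a ^ 2 * Delk M a (y 1) * Real.sin (y 2) ^ 2) / Sigk a (y 1) (y 2))
    (fun r t => -Real.sin t ^ 2 * ((r ^ 2 + a ^ 2) ^ 2 -
          a ^ 2 * Delk M a r * Real.sin t ^ 2) / Sigk a r t) x _ _ (fun _ => rfl)
    (by fun_prop (disch := assumption))
    ((((((hasDerivAt_pow 2 (x 1)).add_const (a^2)).pow 2).sub
      ((dr.const_mul (a^2)).mul_const (Real.sin (x 2)^2))).const_mul (-Real.sin (x 2)^2)).div sr hS)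
    ((ss.neg.mul ((ss.const_mul (a^2 * Delk M a (x 1))).const_sub ((x 1 ^ 2 + a ^ 2) ^ 2))).div st hS) j
  have key : ∀ {q A B C D : ℝ}, q = (![0, A, B, 0] : Fin 4 → ℝ) j → A = C → B = D →
    q = (![0, C, D, 0] : Fin 4 → ℝ) j := by
    intro q A B C D h1 h2 h3; rw [h1, h2, h3]
  have key0 : pd j (fun _ => (0:ℝ)) x = (![0, 0, 0, 0] : Fin 4 → ℝ) j := by
    rw [d0]; fin_cases j <;> rfl
  fin_cases l <;> fin_cases k
  · refine key h00 ?_ ?_ <;> simp [dGr, dGt] <;> field_simp <;> ring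
  · exact key0
  · exact key0
  · refine key h03 ?_ ?_ <;> simp [dGr, dGt] <;> field_simp <;> ring
  · exact key0
  · refine key h11 ?_ ?_ <;> simp [dGr, dGt] <;> field_simp <;> ring
  · exact key0
  · exact key0
  · exact key0
  · exact key0
  · refine key h22 ?_ ?_ <;> simp [dGr, dGt] <;> field_simp <;> ring
  · exact key0
  · refine key h03 ?_ ?_ <;> simp [dGr, dGt] <;> field_simp <;> ring
  · exact key0
  · exact key0
  · refine key h33 ?_ ?_ <;> simp [dGr, dGt] <;> field_simp <;> ring

lemma det_kerr (M a : ℝ) (x : Fin 4 → ℝ) (hS : Sigk a (x 1) (x 2) ≠ 0) (hΔ : Delk M a (x 1) ≠ 0)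
    (hs : Real.sin (x 2) ≠ 0) : IsUnit (kerrMetric M a x).det := by
  have : (kerrMetric M a x).det = -(Sigk a (x 1) (x 2))^2 * Real.sin (x 2)^2 := by
    simp [kerrMetric, Matrix.det_succ_row_zero, Fin.sum_univ_succ, Fin.succAbove]
    have hc : Real.cos (x 2)^2 = 1 - Real.sin (x 2)^2 := by
      linarith [Real.sin_sq_add_cos_sq (x 2)]
    field_simp
    unfold Sigk Delk
    rw [hc]
    ring
  rw [this]
  exact isUnit_iff_ne_zero.mpr (by simp [hS, hs])

lemma christ_contract (M a : ℝ) (x : Fin 4 → ℝ) (hS : Sigk a (x 1) (x 2) ≠ 0)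
    (hΔ : Delk M a (x 1) ≠ 0) (hs : Real.sin (x 2) ≠ 0) (V L W : Fin 4 → ℝ)
    (h : ∀ l, (kerrMetric M a x).mulVec W l = ∑ j, ∑ k, (1/2) *
      (pd j (fun y => kerrMetric M a y l k) x + pd k (fun y => kerrMetric M a y j l) x
      - pd l (fun y => kerrMetric M a y j k) x) * V j * L k) (i : Fin 4) :
    ∑ j, ∑ k, kerrChristoffel M a i j k x * V j * L k = W i := by
  have e : W i = ((kerrMetric M a x)⁻¹.mulVec ((kerrMetric M a x).mulVec W)) i := by
    rw [Matrix.mulVec_mulVec, Matrix.nonsing_inv_mul _ (det_kerr M a x hS hΔ hs), Matrix.one_mulVec]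
  rw [e]
  unfold kerrChristoffel
  generalize (kerrMetric M a x)⁻¹ = G
  rw [funext h]
  simp only [Matrix.mulVec, dotProduct, Fin.sum_univ_four]
  ring
def nn0 (a r c s S Δ δ v0 v1 v2 v3 l0 l1 l2 l3 : ℝ) : ℝ :=
  v0*l1*(S*δ-2*r*Δ)/(2*S*Δ)+v1*l0*(S*δ+2*r*Δ)/(2*S*Δ)-(v0*l3+v3*l0)*a^2*s*c/S
    -(v1*l2+v2*l1)*r*a*s/(S*Δ)-v2*l3*a*c/S+v3*l2*a*c/S
def nn1 (a r c s S Δ δ v0 v1 v2 v3 l0 l1 l2 l3 : ℝ) : ℝ :=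
  v0*l0*Δ*(S*δ-2*r*Δ)/(2*S)-(v0*l2+v2*l0)*r*a*s*Δ/S+v1*l1*(r/S-δ/(2*Δ))
    -(v1*l3+v3*l1)*a^2*s*c/S-(v2*l2+v3*l3)*r*Δ/S
def nn2 (a r c s S Δ v0 v1 v2 v3 l0 l1 l2 l3 : ℝ) : ℝ :=
  v0*l1*r*a*s/S-v1*l0*r*a*s/S+(v0*l3+v3*l0)*a*c*Δ/S+(v1*l2+v2*l1)*r/S
    +v2*l3*(c/s)*(S+a^2*s^2)/S-v3*l2*a^2*s*c/S
def nn3 (a r c s S Δ v0 v1 v2 v3 l0 l1 l2 l3 : ℝ) : ℝ :=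
  -(v0*l0*a^2*s*c*Δ/S)-(v0*l2+v2*l0)*a*c*Δ/S+v1*l1*a^2*s*c/(Δ*S)+(v1*l3+v3*l1)*r/S
    -v2*l2*(c/s)*(S+a^2*s^2)/S-v3*l3*a^2*s*c/S


def Vf (a r c s : ℝ) (v0 v1 v2 v3 : ℝ) : Fin 4 → ℝ :=
  ![v0*(r^2+a^2)+v2*(a*s), v1, v3, v0*a+v2/s]

set_option maxHeartbeats 4000000 in
lemma frame_lower (M a : ℝ) (x : Fin 4 → ℝ) (hS : Sigk a (x 1) (x 2) ≠ 0)
    (hΔ : Delk M a (x 1) ≠ 0) (hs : Real.sin (x 2) ≠ 0) (v0 v1 v2 v3 l0 l1 l2 l3 n0 n1 n2 n3 : ℝ)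
    (h0 : n0 = nn0 a (x 1) (Real.cos (x 2)) (Real.sin (x 2)) (Sigk a (x 1) (x 2)) (Delk M a (x 1))
      (2*x 1-2*M) v0 v1 v2 v3 l0 l1 l2 l3)
    (h1 : n1 = nn1 a (x 1) (Real.cos (x 2)) (Real.sin (x 2)) (Sigk a (x 1) (x 2)) (Delk M a (x 1))
      (2*x 1-2*M) v0 v1 v2 v3 l0 l1 l2 l3)
    (h2 : n2 = nn2 a (x 1) (Real.cos (x 2)) (Real.sin (x 2)) (Sigk a (x 1) (x 2)) (Delk M a (x 1))
      v0 v1 v2 v3 l0 l1 l2 l3)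
    (h3 : n3 = nn3 a (x 1) (Real.cos (x 2)) (Real.sin (x 2)) (Sigk a (x 1) (x 2)) (Delk M a (x 1))
      v0 v1 v2 v3 l0 l1 l2 l3) (l : Fin 4) :
    (kerrMetric M a x).mulVec
     ![n0*(x 1^2+a^2)+n2*(a*Real.sin (x 2)) - (l0*(v1*(2*x 1)) + l2*(v3*(a*Real.cos (x 2)))), n1, n3,
       n0*a+n2/Real.sin (x 2) + l2*(v3*(Real.cos (x 2)/Real.sin (x 2)^2))] l
      = ∑ j, ∑ k, (1/2) *
      (pd j (fun y => kerrMetric M a y l k) x + pd k (fun y => kerrMetric M a y j l) x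
      - pd l (fun y => kerrMetric M a y j k) x) *
        Vf a (x 1) (Real.cos (x 2)) (Real.sin (x 2)) v0 v1 v2 v3 j
         * Vf a (x 1) (Real.cos (x 2)) (Real.sin (x 2)) l0 l1 l2 l3 k := by
  simp only [pd_kerr M a x hS hΔ]
  have hc : Real.cos (x 2)^2 = 1 - Real.sin (x 2)^2 := by
      linarith [Real.sin_sq_add_cos_sq (x 2)]
  have hSd : Sigk a (x 1) (x 2) = x 1^2 + a^2 * Real.cos (x 2)^2 := rfl
  have hDd : Delk M a (x 1) = x 1^2 - 2*M*x 1 + a^2 := rfl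
  simp only [Matrix.mulVec, dotProduct, Fin.sum_univ_four, kerrMetric]
  generalize Real.cos (x 2) = c at *
  generalize Real.sin (x 2) = s at *
  generalize Sigk a (x 1) (x 2) = S at *
  generalize Delk M a (x 1) = Δ at *
  generalize x 1 = r at *
  have hM : 2*M*r = r^2+a^2-Δ := by linarith
  have hS2 : S = r^2+a^2-a^2*s^2 := by rw [hSd, hc]; ring
  clear hSd
  subst h0 h1 h2 h3
  unfold nn0 nn1 nn2 nn3
  fin_cases l <;> simp [Vf, dGr, dGt]
  all_goals field_simp
  · rw [hDd, hS2]; ring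
  · rw [hDd, hS2]; ring
  · rw [hDd, hS2]; ring
  · rw [hDd, hS2]; ring

lemma parallel_general (M a : ℝ) (x : ℝ → Fin 4 → ℝ) (τ : ℝ) (L : ℝ → Fin 4 → ℝ)
    (hS : Sigk a (x τ 1) (x τ 2) ≠ 0)
    (hΔ : Delk M a (x τ 1) ≠ 0) (hs : Real.sin (x τ 2) ≠ 0)
    (v0 v1 v2 v3 d0 d1 d2 d3 : ℝ) (l0 l1 l2 l3 : ℝ → ℝ)
    (hx1 : HasDerivAt (fun t => x t 1) v1 τ) (hx2 : HasDerivAt (fun t => x t 2) v3 τ)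
    (hv : ∀ j, deriv (fun t => x t j) τ =
      Vf a (x τ 1) (Real.cos (x τ 2)) (Real.sin (x τ 2)) v0 v1 v2 v3 j)
    (hL : ∀ᶠ t in nhds τ, L t =
      Vf a (x t 1) (Real.cos (x t 2)) (Real.sin (x t 2)) (l0 t) (l1 t) (l2 t) (l3 t))
    (hl0 : HasDerivAt l0 d0 τ) (hl1 : HasDerivAt l1 d1 τ) (hl2 : HasDerivAt l2 d2 τ)
    (hl3 : HasDerivAt l3 d3 τ)
    (h0 : d0 + nn0 a (x τ 1) (Real.cos (x τ 2)) (Real.sin (x τ 2)) (Sigk a (x τ 1) (x τ 2))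
      (Delk M a (x τ 1)) (2*x τ 1-2*M) v0 v1 v2 v3 (l0 τ) (l1 τ) (l2 τ) (l3 τ) = 0)
    (h1 : d1 + nn1 a (x τ 1) (Real.cos (x τ 2)) (Real.sin (x τ 2)) (Sigk a (x τ 1) (x τ 2))
      (Delk M a (x τ 1)) (2*x τ 1-2*M) v0 v1 v2 v3 (l0 τ) (l1 τ) (l2 τ) (l3 τ) = 0)
    (h2 : d2 + nn2 a (x τ 1) (Real.cos (x τ 2)) (Real.sin (x τ 2)) (Sigk a (x τ 1) (x τ 2))
      (Delk M a (x τ 1)) v0 v1 v2 v3 (l0 τ) (l1 τ) (l2 τ) (l3 τ) = 0)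
    (h3 : d3 + nn3 a (x τ 1) (Real.cos (x τ 2)) (Real.sin (x τ 2)) (Sigk a (x τ 1) (x τ 2))
      (Delk M a (x τ 1)) v0 v1 v2 v3 (l0 τ) (l1 τ) (l2 τ) (l3 τ) = 0) :
    ParallelAt M a x L τ := by
  intro i
  have hd : deriv (fun t => L t i) τ = deriv (fun t =>
      Vf a (x t 1) (Real.cos (x t 2)) (Real.sin (x t 2)) (l0 t) (l1 t) (l2 t) (l3 t) i) τ := by
    apply Filter.EventuallyEq.deriv_eq
    filter_upwards [hL] with t ht
    rw [ht]
  rw [hd, hL.self_of_nhds]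
  simp only [hv]
  rw [christ_contract M a (x τ) hS hΔ hs _ _ _ (frame_lower M a (x τ) hS hΔ hs v0 v1 v2 v3
    (l0 τ) (l1 τ) (l2 τ) (l3 τ) _ _ _ _ (by linarith : -d0 = _) (by linarith : -d1 = _)
    (by linarith : -d2 = _) (by linarith : -d3 = _)) i]
  have hsin := hx2.sin
  fin_cases i
  · have : HasDerivAt (fun t => l0 t * (x t 1 ^2 + a^2) + l2 t * (a * Real.sin (x t 2)))
      (d0 * (x τ 1 ^2 + a^2) + l0 τ * (2 * x τ 1 * v1) + (d2 * (a * Real.sin (x τ 2))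
        + l2 τ * (a * (Real.cos (x τ 2) * v3)))) τ := by
      refine ((hl0.mul ((hx1.pow 2).add_const (a^2))).add (hl2.mul (hsin.const_mul a))).congr_deriv ?_
      simp
    simp [Vf, this.deriv]
    ring
  · simp [Vf, hl1.deriv]
  · simp [Vf, hl3.deriv]
  · have : HasDerivAt (fun t => l0 t * a + l2 t / Real.sin (x t 2))
      (d0 * a + (d2 * Real.sin (x τ 2) - l2 τ * (Real.cos (x τ 2) * v3)) / Real.sin (x τ 2)^2) τ :=
      (hl0.mul_const a).add (hl2.div hsin hs)
    simp [Vf, this.deriv]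
    field_simp
    ring

lemma lam_deriv (m S : ℝ → ℝ) (τ md So k : ℝ) (hk : k ≠ 0) (hS0 : S τ ≠ 0)
    (hm : HasDerivAt m (md / S τ) τ) (hS : HasDerivAt S (So / S τ) τ) :
    HasDerivAt (fun t => m t / (k * S t)) ((md - m τ * So / S τ) / (k * S τ ^ 2)) τ := by
  refine (hm.div (hS.const_mul k) (mul_ne_zero hk hS0)).congr_deriv ?_
  field_simp

section hom
variable (a r c s S Δ δ V0 V1 V2 V3 m0 m1 m2 m3 k : ℝ)
lemma nn0_hom : nn0 a r c s S Δ δ (V0/S) (V1/S) (V2/S) (V3/S) (m0/(k*S)) (m1/(k*S)) (m2/(k*S))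
    (m3/(k*S)) = nn0 a r c s S Δ δ V0 V1 V2 V3 m0 m1 m2 m3 / (k*S^2) := by
  unfold nn0; ring
lemma nn1_hom : nn1 a r c s S Δ δ (V0/S) (V1/S) (V2/S) (V3/S) (m0/(k*S)) (m1/(k*S)) (m2/(k*S))
    (m3/(k*S)) = nn1 a r c s S Δ δ V0 V1 V2 V3 m0 m1 m2 m3 / (k*S^2) := by
  unfold nn1; ring
lemma nn2_hom : nn2 a r c s S Δ (V0/S) (V1/S) (V2/S) (V3/S) (m0/(k*S)) (m1/(k*S)) (m2/(k*S))
    (m3/(k*S)) = nn2 a r c s S Δ V0 V1 V2 V3 m0 m1 m2 m3 / (k*S^2) := by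
  unfold nn2; ring
lemma nn3_hom : nn3 a r c s S Δ (V0/S) (V1/S) (V2/S) (V3/S) (m0/(k*S)) (m1/(k*S)) (m2/(k*S))
    (m3/(k*S)) = nn3 a r c s S Δ V0 V1 V2 V3 m0 m1 m2 m3 / (k*S^2) := by
  unfold nn3; ring
end hom

section vecs
variable (M a E Φ κ : ℝ) (x : ℝ → Fin 4 → ℝ) (t : ℝ)

lemma L3_eq (hS : 0 < Sigk a (x t 1) (x t 2)) (hΔ : 0 < Delk M a (x t 1))
    (hs : Real.sin (x t 2) ≠ 0) (hκ : 0 < κ) :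
    L3vec M a E Φ κ x t = Vf a (x t 1) (Real.cos (x t 2)) (Real.sin (x t 2))
      (a*Real.cos (x t 2)*Real.sqrt (Rk M a E Φ κ (x t 1))/Delk M a (x t 1)
        /(Real.sqrt κ * Sigk a (x t 1) (x t 2)))
      (a*Real.cos (x t 2)*Pk a E Φ (x t 1)/(Real.sqrt κ * Sigk a (x t 1) (x t 2)))
      (-(x t 1*Real.sqrt (Thk a E Φ κ (x t 2)))/(Real.sqrt κ * Sigk a (x t 1) (x t 2)))
      (-(x t 1*Dk a E Φ (x t 2))/(Real.sqrt κ * Sigk a (x t 1) (x t 2))) := by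
  have h1 := Real.sqrt_pos.mpr hS
  have h2 := Real.sqrt_pos.mpr hΔ
  have h3 := Real.sqrt_pos.mpr hκ
  have h1' := Real.sq_sqrt hS.le
  have h2' := Real.sq_sqrt hΔ.le
  unfold L3vec e0 e1 e2 e3 Vf
  rw [Real.sqrt_mul hκ.le, Real.sqrt_mul hS.le, Real.sqrt_div hΔ.le]
  generalize Real.sqrt (Sigk a (x t 1) (x t 2)) = σ at *
  generalize Real.sqrt (Delk M a (x t 1)) = d at *
  rw [← h1', ← h2']
  generalize Real.sqrt κ = k at *
  ext i
  fin_cases i <;> simp <;> field_simp <;> ring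

lemma Lt1_eq (hS : 0 < Sigk a (x t 1) (x t 2)) (hΔ : 0 < Delk M a (x t 1))
    (hs : Real.sin (x t 2) ≠ 0) (hκ : 0 < κ) (hq : 0 < Real.sqrt (piomk a κ (x t 1) (x t 2))) :
    Lt1vec M a E Φ κ x t = Vf a (x t 1) (Real.cos (x t 2)) (Real.sin (x t 2))
      (Real.sqrt (piomk a κ (x t 1) (x t 2))*x t 1*Real.sqrt (Rk M a E Φ κ (x t 1))/Delk M a (x t 1)
        /(Real.sqrt κ * Sigk a (x t 1) (x t 2)))
      (Real.sqrt (piomk a κ (x t 1) (x t 2))*x t 1*Pk a E Φ (x t 1)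
        /(Real.sqrt κ * Sigk a (x t 1) (x t 2)))
      (a*Real.cos (x t 2)*(Real.sqrt (piomk a κ (x t 1) (x t 2)))⁻¹*Real.sqrt (Thk a E Φ κ (x t 2))
        /(Real.sqrt κ * Sigk a (x t 1) (x t 2)))
      (a*Real.cos (x t 2)*(Real.sqrt (piomk a κ (x t 1) (x t 2)))⁻¹*Dk a E Φ (x t 2)
        /(Real.sqrt κ * Sigk a (x t 1) (x t 2))) := by
  have h1 := Real.sqrt_pos.mpr hS
  have h2 := Real.sqrt_pos.mpr hΔ
  have h3 := Real.sqrt_pos.mpr hκ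
  have h1' := Real.sq_sqrt hS.le
  have h2' := Real.sq_sqrt hΔ.le
  unfold Lt1vec e0 e1 e2 e3 Vf
  rw [Real.sqrt_mul hκ.le, Real.sqrt_mul hS.le, Real.sqrt_div hΔ.le]
  generalize Real.sqrt (Sigk a (x t 1) (x t 2)) = σ at *
  generalize Real.sqrt (Delk M a (x t 1)) = d at *
  rw [← h1', ← h2']
  generalize Real.sqrt κ = k at *
  generalize Real.sqrt (piomk a κ (x t 1) (x t 2)) = q at *
  ext i
  fin_cases i <;> simp <;> field_simp <;> ring

lemma Lt2_eq (hS : 0 < Sigk a (x t 1) (x t 2)) (hΔ : 0 < Delk M a (x t 1))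
    (hs : Real.sin (x t 2) ≠ 0) (hq : 0 < Real.sqrt (piomk a κ (x t 1) (x t 2))) :
    Lt2vec M a E Φ κ x t = Vf a (x t 1) (Real.cos (x t 2)) (Real.sin (x t 2))
      (Real.sqrt (piomk a κ (x t 1) (x t 2))*Pk a E Φ (x t 1)/Delk M a (x t 1)
        /(1 * Sigk a (x t 1) (x t 2)))
      (Real.sqrt (piomk a κ (x t 1) (x t 2))*Real.sqrt (Rk M a E Φ κ (x t 1))
        /(1 * Sigk a (x t 1) (x t 2)))
      (-(Dk a E Φ (x t 2)*(Real.sqrt (piomk a κ (x t 1) (x t 2)))⁻¹)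
        /(1 * Sigk a (x t 1) (x t 2)))
      (Real.sqrt (Thk a E Φ κ (x t 2))*(Real.sqrt (piomk a κ (x t 1) (x t 2)))⁻¹
        /(1 * Sigk a (x t 1) (x t 2))) := by
  have h1 := Real.sqrt_pos.mpr hS
  have h2 := Real.sqrt_pos.mpr hΔ
  have h1' := Real.sq_sqrt hS.le
  have h2' := Real.sq_sqrt hΔ.le
  unfold Lt2vec e0 e1 e2 e3 Vf
  rw [Real.sqrt_mul hS.le, Real.sqrt_div hΔ.le]
  generalize Real.sqrt (Sigk a (x t 1) (x t 2)) = σ at *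
  generalize Real.sqrt (Delk M a (x t 1)) = d at *
  rw [← h1', ← h2']
  generalize Real.sqrt (piomk a κ (x t 1) (x t 2)) = q at *
  ext i
  fin_cases i <;> simp <;> field_simp <;> ring
end vecs
set_option linter.unusedSectionVars false
set_option linter.unusedSimpArgs false
section alg
variable (a r c s S Δ δ P D E u v A B ω q p : ℝ) (hs : s ≠ 0) (hS : S ≠ 0) (hΔ : Δ ≠ 0)
  (hSd : S = r^2 + a^2*c^2) (hA : A = v^2+D^2) (hB : B = v^2+D^2+S) (hA0 : A ≠ 0) (hB0 : B ≠ 0)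
  (hω : ω = a^2*s*c*v/A - r*u/B) (hp : p = q*B/A) (hE : E * S = P - a*s*D) (hu : u^2 = P^2 - Δ*B)
include hs hS hΔ hSd hA hB hA0 hB0 hω hp hE hu

lemma m3_0 : (a*(-s*v)*u/Δ + a*c*(2*r*P*E-δ*B/2-r*Δ)/Δ - a*c*u*(δ*u)/Δ^2) - (a*c*u/Δ)*(2*r*u-2*a^2*s*c*v)/S
  + nn0 a r c s S Δ δ (P/Δ) u (-D) v (a*c*u/Δ) (a*c*P) (-(r*v)) (-(r*D)) = 0 := by
  subst hp hω
  have hE' : E = (P - a*s*D)/S := by field_simp; linarith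
  subst hE'
  unfold nn0
  subst hA
  have h2 : P^2 = u^2 + Δ * B := by linarith
  have h3 : P^3 = P*(u^2 + Δ * B) := by rw [← h2]; ring
  field_simp
  ring_nf
  try simp only [h2, h3]
  try rw [hB]
  rw [hSd]
  ring

lemma m3_1 : (a*(-s*v)*P+a*c*(2*r*E*u)) - (a*c*P)*(2*r*u-2*a^2*s*c*v)/S
  + nn1 a r c s S Δ δ (P/Δ) u (-D) v (a*c*u/Δ) (a*c*P) (-(r*v)) (-(r*D)) = 0 := by
  subst hp hω
  have hE' : E = (P - a*s*D)/S := by field_simp; linarith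
  subst hE'
  unfold nn1
  subst hA
  have h2 : P^2 = u^2 + Δ * B := by linarith
  have h3 : P^3 = P*(u^2 + Δ * B) := by rw [← h2]; ring
  field_simp
  ring_nf
  try simp only [h2, h3]
  try rw [hB]
  rw [hSd]
  ring

lemma m3_2 : (-(u*v+r*(a^2*s*c-D*(c*(2*a*E-D/s))))) - (-(r*v))*(2*r*u-2*a^2*s*c*v)/S
  + nn2 a r c s S Δ (P/Δ) u (-D) v (a*c*u/Δ) (a*c*P) (-(r*v)) (-(r*D)) = 0 := by
  subst hp hω
  have hE' : E = (P - a*s*D)/S := by field_simp; linarith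
  subst hE'
  unfold nn2
  subst hA
  have h2 : P^2 = u^2 + Δ * B := by linarith
  have h3 : P^3 = P*(u^2 + Δ * B) := by rw [← h2]; ring
  field_simp
  ring_nf
  try simp only [h2, h3]
  try rw [hB]
  rw [hSd]
  ring

lemma m3_3 : (-(u*D+r*(c*(2*a*E-D/s)*v))) - (-(r*D))*(2*r*u-2*a^2*s*c*v)/S
  + nn3 a r c s S Δ (P/Δ) u (-D) v (a*c*u/Δ) (a*c*P) (-(r*v)) (-(r*D)) = 0 := by
  subst hp hω
  have hE' : E = (P - a*s*D)/S := by field_simp; linarith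
  subst hE'
  unfold nn3
  subst hA
  have h2 : P^2 = u^2 + Δ * B := by linarith
  have h3 : P^3 = P*(u^2 + Δ * B) := by rw [← h2]; ring
  field_simp
  ring_nf
  try simp only [h2, h3]
  try rw [hB]
  rw [hSd]
  ring

lemma m1_0 : (q*ω*r*u/Δ+q*u*u/Δ+q*r*(2*r*P*E-δ*B/2-r*Δ)/Δ-q*r*u*(δ*u)/Δ^2) - (q*r*u/Δ)*(2*r*u-2*a^2*s*c*v)/S
  + nn0 a r c s S Δ δ (P/Δ) u (-D) v (q*r*u/Δ) (q*r*P) (a*c*p*v) (a*c*p*D) = (A+a^2*c^2)*(P/B-a*s*D/A)*(q*P/Δ) := by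
  subst hp hω
  have hE' : E = (P - a*s*D)/S := by field_simp; linarith
  subst hE'
  unfold nn0
  subst hA
  have h2 : P^2 = u^2 + Δ * B := by linarith
  have h3 : P^3 = P*(u^2 + Δ * B) := by rw [← h2]; ring
  field_simp
  ring_nf
  try simp only [h2, h3]
  try rw [hB]
  rw [hSd]
  ring

lemma m1_1 : (q*ω*r*P+q*u*P+q*r*(2*r*E*u)) - (q*r*P)*(2*r*u-2*a^2*s*c*v)/S
  + nn1 a r c s S Δ δ (P/Δ) u (-D) v (q*r*u/Δ) (q*r*P) (a*c*p*v) (a*c*p*D) = (A+a^2*c^2)*(P/B-a*s*D/A)*(q*u) := by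
  subst hp hω
  have hE' : E = (P - a*s*D)/S := by field_simp; linarith
  subst hE'
  unfold nn1
  subst hA
  have h2 : P^2 = u^2 + Δ * B := by linarith
  have h3 : P^3 = P*(u^2 + Δ * B) := by rw [← h2]; ring
  field_simp
  ring_nf
  try simp only [h2, h3]
  try rw [hB]
  rw [hSd]
  ring

lemma m1_2 : (a*(-s*v)*p*v+a*c*(-(p*ω))*v+a*c*p*(a^2*s*c-D*(c*(2*a*E-D/s)))) - (a*c*p*v)*(2*r*u-2*a^2*s*c*v)/S
  + nn2 a r c s S Δ (P/Δ) u (-D) v (q*r*u/Δ) (q*r*P) (a*c*p*v) (a*c*p*D) = (A+a^2*c^2)*(P/B-a*s*D/A)*(-(D*p)) := by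
  subst hp hω
  have hE' : E = (P - a*s*D)/S := by field_simp; linarith
  subst hE'
  unfold nn2
  subst hA
  have h2 : P^2 = u^2 + Δ * B := by linarith
  have h3 : P^3 = P*(u^2 + Δ * B) := by rw [← h2]; ring
  field_simp
  ring_nf
  try simp only [h2, h3]
  try rw [hB]
  rw [hSd]
  ring

lemma m1_3 : (a*(-s*v)*p*D+a*c*(-(p*ω))*D+a*c*p*(c*(2*a*E-D/s)*v)) - (a*c*p*D)*(2*r*u-2*a^2*s*c*v)/S
  + nn3 a r c s S Δ (P/Δ) u (-D) v (q*r*u/Δ) (q*r*P) (a*c*p*v) (a*c*p*D) = (A+a^2*c^2)*(P/B-a*s*D/A)*(v*p) := by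
  subst hp hω
  have hE' : E = (P - a*s*D)/S := by field_simp; linarith
  subst hE'
  unfold nn3
  subst hA
  have h2 : P^2 = u^2 + Δ * B := by linarith
  have h3 : P^3 = P*(u^2 + Δ * B) := by rw [← h2]; ring
  field_simp
  ring_nf
  try simp only [h2, h3]
  try rw [hB]
  rw [hSd]
  ring

lemma m2_0 : (q*ω*P/Δ+q*(2*r*E*u)/Δ-q*P*(δ*u)/Δ^2) - (q*P/Δ)*(2*r*u-2*a^2*s*c*v)/S
  + nn0 a r c s S Δ δ (P/Δ) u (-D) v (q*P/Δ) (q*u) (-(D*p)) (v*p) = -((P/B-a*s*D/A)*(q*r*u/Δ)) := by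
  subst hp hω
  have hE' : E = (P - a*s*D)/S := by field_simp; linarith
  subst hE'
  unfold nn0
  subst hA
  have h2 : P^2 = u^2 + Δ * B := by linarith
  have h3 : P^3 = P*(u^2 + Δ * B) := by rw [← h2]; ring
  field_simp
  ring_nf
  try simp only [h2, h3]
  try rw [hB]
  rw [hSd]
  ring

lemma m2_1 : (q*ω*u+q*(2*r*P*E-δ*B/2-r*Δ)) - (q*u)*(2*r*u-2*a^2*s*c*v)/S
  + nn1 a r c s S Δ δ (P/Δ) u (-D) v (q*P/Δ) (q*u) (-(D*p)) (v*p) = -((P/B-a*s*D/A)*(q*r*P)) := by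
  subst hp hω
  have hE' : E = (P - a*s*D)/S := by field_simp; linarith
  subst hE'
  unfold nn1
  subst hA
  have h2 : P^2 = u^2 + Δ * B := by linarith
  have h3 : P^3 = P*(u^2 + Δ * B) := by rw [← h2]; ring
  field_simp
  ring_nf
  try simp only [h2, h3]
  try rw [hB]
  rw [hSd]
  ring

lemma m2_2 : (-((c*(2*a*E-D/s)*v)*p+D*(-(p*ω)))) - (-(D*p))*(2*r*u-2*a^2*s*c*v)/S
  + nn2 a r c s S Δ (P/Δ) u (-D) v (q*P/Δ) (q*u) (-(D*p)) (v*p) = -((P/B-a*s*D/A)*(a*c*p*v)) := by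
  subst hp hω
  have hE' : E = (P - a*s*D)/S := by field_simp; linarith
  subst hE'
  unfold nn2
  subst hA
  have h2 : P^2 = u^2 + Δ * B := by linarith
  have h3 : P^3 = P*(u^2 + Δ * B) := by rw [← h2]; ring
  field_simp
  ring_nf
  try simp only [h2, h3]
  try rw [hB]
  rw [hSd]
  ring

lemma m2_3 : ((a^2*s*c-D*(c*(2*a*E-D/s)))*p+v*(-(p*ω))) - (v*p)*(2*r*u-2*a^2*s*c*v)/S
  + nn3 a r c s S Δ (P/Δ) u (-D) v (q*P/Δ) (q*u) (-(D*p)) (v*p) = -((P/B-a*s*D/A)*(a*c*p*D)) := by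
  subst hp hω
  have hE' : E = (P - a*s*D)/S := by field_simp; linarith
  subst hE'
  unfold nn3
  subst hA
  have h2 : P^2 = u^2 + Δ * B := by linarith
  have h3 : P^3 = P*(u^2 + Δ * B) := by rw [← h2]; ring
  field_simp
  ring_nf
  try simp only [h2, h3]
  try rw [hB]
  rw [hSd]
  ring

end alg

section mder
variable (a δ E B ω τ : ℝ) (r c s P D Δ u v q p S : ℝ → ℝ) (hΔ0 : Δ τ ≠ 0)
  (hr : HasDerivAt r (u τ / S τ) τ) (hc : HasDerivAt c (-s τ * v τ / S τ) τ)
  (hP : HasDerivAt P ((2*(r τ)*E*(u τ)) / S τ) τ) (hD : HasDerivAt D (((c τ)*(2*a*E-(D τ)/(s τ))*(v τ)) / S τ) τ)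
  (hΔ : HasDerivAt Δ (δ * u τ / S τ) τ) (hu : HasDerivAt u ((2*(r τ)*(P τ)*E-δ*B/2-(r τ)*(Δ τ)) / S τ) τ)
  (hv : HasDerivAt v ((a^2*(s τ)*(c τ)-(D τ)*((c τ)*(2*a*E-(D τ)/(s τ)))) / S τ) τ) (hq : HasDerivAt q (q τ * ω / S τ) τ)
  (hp : HasDerivAt p (-(p τ * ω) / S τ) τ)
include hΔ0 hr hc hP hD hΔ hu hv hq hp
lemma m3d_0 : HasDerivAt (fun t => (a*(c t)*(u t)/(Δ t))) ((a*(-(s τ)*(v τ))*(u τ)/(Δ τ) + a*(c τ)*(2*(r τ)*(P τ)*E-δ*B/2-(r τ)*(Δ τ))/(Δ τ) - a*(c τ)*(u τ)*(δ*(u τ))/(Δ τ)^2) / S τ) τ := by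
  refine (((hc.const_mul a).mul hu).div hΔ hΔ0).congr_deriv ?_
  try simp only [Pi.mul_apply]
  field_simp
  try ring

lemma m3d_1 : HasDerivAt (fun t => (a*(c t)*(P t))) ((a*(-(s τ)*(v τ))*(P τ)+a*(c τ)*(2*(r τ)*E*(u τ))) / S τ) τ := by
  refine ((hc.const_mul a).mul hP).congr_deriv ?_
  try simp only [Pi.mul_apply]
  field_simp
  try ring

lemma m3d_2 : HasDerivAt (fun t => (-((r t)*(v t)))) ((-((u τ)*(v τ)+(r τ)*(a^2*(s τ)*(c τ)-(D τ)*((c τ)*(2*a*E-(D τ)/(s τ)))))) / S τ) τ := by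
  refine ((hr.mul hv).neg).congr_deriv ?_
  try simp only [Pi.mul_apply]
  field_simp
  try ring

lemma m3d_3 : HasDerivAt (fun t => (-((r t)*(D t)))) ((-((u τ)*(D τ)+(r τ)*((c τ)*(2*a*E-(D τ)/(s τ))*(v τ)))) / S τ) τ := by
  refine ((hr.mul hD).neg).congr_deriv ?_
  try simp only [Pi.mul_apply]
  field_simp
  try ring

lemma m1d_0 : HasDerivAt (fun t => ((q t)*(r t)*(u t)/(Δ t))) (((q τ)*ω*(r τ)*(u τ)/(Δ τ)+(q τ)*(u τ)*(u τ)/(Δ τ)+(q τ)*(r τ)*(2*(r τ)*(P τ)*E-δ*B/2-(r τ)*(Δ τ))/(Δ τ)-(q τ)*(r τ)*(u τ)*(δ*(u τ))/(Δ τ)^2) / S τ) τ := by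
  refine (((hq.mul hr).mul hu).div hΔ hΔ0).congr_deriv ?_
  try simp only [Pi.mul_apply]
  field_simp
  try ring

lemma m1d_1 : HasDerivAt (fun t => ((q t)*(r t)*(P t))) (((q τ)*ω*(r τ)*(P τ)+(q τ)*(u τ)*(P τ)+(q τ)*(r τ)*(2*(r τ)*E*(u τ))) / S τ) τ := by
  refine ((hq.mul hr).mul hP).congr_deriv ?_
  try simp only [Pi.mul_apply]
  field_simp
  try ring

lemma m1d_2 : HasDerivAt (fun t => (a*(c t)*(p t)*(v t))) ((a*(-(s τ)*(v τ))*(p τ)*(v τ)+a*(c τ)*(-((p τ)*ω))*(v τ)+a*(c τ)*(p τ)*(a^2*(s τ)*(c τ)-(D τ)*((c τ)*(2*a*E-(D τ)/(s τ))))) / S τ) τ := by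
  refine (((hc.const_mul a).mul hp).mul hv).congr_deriv ?_
  try simp only [Pi.mul_apply]
  field_simp
  try ring

lemma m1d_3 : HasDerivAt (fun t => (a*(c t)*(p t)*(D t))) ((a*(-(s τ)*(v τ))*(p τ)*(D τ)+a*(c τ)*(-((p τ)*ω))*(D τ)+a*(c τ)*(p τ)*((c τ)*(2*a*E-(D τ)/(s τ))*(v τ))) / S τ) τ := by
  refine (((hc.const_mul a).mul hp).mul hD).congr_deriv ?_
  try simp only [Pi.mul_apply]
  field_simp
  try ring

lemma m2d_0 : HasDerivAt (fun t => ((q t)*(P t)/(Δ t))) (((q τ)*ω*(P τ)/(Δ τ)+(q τ)*(2*(r τ)*E*(u τ))/(Δ τ)-(q τ)*(P τ)*(δ*(u τ))/(Δ τ)^2) / S τ) τ := by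
  refine ((hq.mul hP).div hΔ hΔ0).congr_deriv ?_
  try simp only [Pi.mul_apply]
  field_simp
  try ring

lemma m2d_1 : HasDerivAt (fun t => ((q t)*(u t))) (((q τ)*ω*(u τ)+(q τ)*(2*(r τ)*(P τ)*E-δ*B/2-(r τ)*(Δ τ))) / S τ) τ := by
  refine (hq.mul hu).congr_deriv ?_
  try simp only [Pi.mul_apply]
  field_simp
  try ring

lemma m2d_2 : HasDerivAt (fun t => (-((D t)*(p t)))) ((-(((c τ)*(2*a*E-(D τ)/(s τ))*(v τ))*(p τ)+(D τ)*(-((p τ)*ω)))) / S τ) τ := by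
  refine ((hD.mul hp).neg).congr_deriv ?_
  try simp only [Pi.mul_apply]
  field_simp
  try ring

lemma m2d_3 : HasDerivAt (fun t => ((v t)*(p t))) (((a^2*(s τ)*(c τ)-(D τ)*((c τ)*(2*a*E-(D τ)/(s τ))))*(p τ)+(v τ)*(-((p τ)*ω))) / S τ) τ := by
  refine (hv.mul hp).congr_deriv ?_
  try simp only [Pi.mul_apply]
  field_simp
  try ring

end mder

section core
variable (a δ E A B ω τ k : ℝ) (r c s P D Δ u v q p S : ℝ → ℝ) (hΔ0 : Δ τ ≠ 0)
  (hr : HasDerivAt r (u τ / S τ) τ) (hc : HasDerivAt c (-s τ * v τ / S τ) τ)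
  (hP : HasDerivAt P ((2*(r τ)*E*(u τ)) / S τ) τ) (hD : HasDerivAt D (((c τ)*(2*a*E-(D τ)/(s τ))*(v τ)) / S τ) τ)
  (hΔ : HasDerivAt Δ (δ * u τ / S τ) τ) (hu : HasDerivAt u ((2*(r τ)*(P τ)*E-δ*B/2-(r τ)*(Δ τ)) / S τ) τ)
  (hv : HasDerivAt v ((a^2*(s τ)*(c τ)-(D τ)*((c τ)*(2*a*E-(D τ)/(s τ)))) / S τ) τ) (hq : HasDerivAt q (q τ * ω / S τ) τ)
  (hp : HasDerivAt p (-(p τ * ω) / S τ) τ) (hSd : HasDerivAt S ((2*(r τ)*(u τ)-2*a^2*(s τ)*(c τ)*(v τ)) / S τ) τ)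
  (hk : k ≠ 0) (hκ : k^2 = A + a^2*(c τ)^2)
  (hs : s τ ≠ 0) (hS : S τ ≠ 0)
  (eS : S τ = (r τ)^2 + a^2*(c τ)^2) (hA : A = (v τ)^2+(D τ)^2) (hB : B = (v τ)^2+(D τ)^2+S τ)
  (hA0 : A ≠ 0) (hB0 : B ≠ 0)
  (hω : ω = a^2*s τ*c τ*v τ/A - r τ*u τ/B) (ep : p τ = q τ*B/A)
  (hE : E * S τ = P τ - a*s τ*D τ) (eu : (u τ)^2 = (P τ)^2 - Δ τ*B)
include hΔ0 hr hc hP hD hΔ hu hv hq hp hSd hk hκ hs hS eS hA hB hA0 hB0 hω ep hE eu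
lemma m3_core : ∃ d0 d1 d2 d3 : ℝ,
  HasDerivAt (fun t => (a*(c t)*(u t)/(Δ t))/(k*S t)) d0 τ ∧
  HasDerivAt (fun t => (a*(c t)*(P t))/(k*S t)) d1 τ ∧
  HasDerivAt (fun t => (-((r t)*(v t)))/(k*S t)) d2 τ ∧
  HasDerivAt (fun t => (-((r t)*(D t)))/(k*S t)) d3 τ ∧
  d0 + nn0 a (r τ) (c τ) (s τ) (S τ) (Δ τ) δ (P τ/Δ τ/S τ) (u τ/S τ) (-D τ/S τ) (v τ/S τ) (((a*(c τ)*(u τ)/(Δ τ)))/(k*S τ)) (((a*(c τ)*(P τ)))/(k*S τ)) (((-((r τ)*(v τ))))/(k*S τ)) (((-((r τ)*(D τ))))/(k*S τ)) = 0 ∧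
  d1 + nn1 a (r τ) (c τ) (s τ) (S τ) (Δ τ) δ (P τ/Δ τ/S τ) (u τ/S τ) (-D τ/S τ) (v τ/S τ) (((a*(c τ)*(u τ)/(Δ τ)))/(k*S τ)) (((a*(c τ)*(P τ)))/(k*S τ)) (((-((r τ)*(v τ))))/(k*S τ)) (((-((r τ)*(D τ))))/(k*S τ)) = 0 ∧
  d2 + nn2 a (r τ) (c τ) (s τ) (S τ) (Δ τ) (P τ/Δ τ/S τ) (u τ/S τ) (-D τ/S τ) (v τ/S τ) (((a*(c τ)*(u τ)/(Δ τ)))/(k*S τ)) (((a*(c τ)*(P τ)))/(k*S τ)) (((-((r τ)*(v τ))))/(k*S τ)) (((-((r τ)*(D τ))))/(k*S τ)) = 0 ∧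
  d3 + nn3 a (r τ) (c τ) (s τ) (S τ) (Δ τ) (P τ/Δ τ/S τ) (u τ/S τ) (-D τ/S τ) (v τ/S τ) (((a*(c τ)*(u τ)/(Δ τ)))/(k*S τ)) (((a*(c τ)*(P τ)))/(k*S τ)) (((-((r τ)*(v τ))))/(k*S τ)) (((-((r τ)*(D τ))))/(k*S τ)) = 0 := by
  have g0 := m3d_0 a δ E B ω τ r c s P D Δ u v q p S hΔ0 hr hc hP hD hΔ hu hv hq hp
  have g1 := m3d_1 a δ E B ω τ r c s P D Δ u v q p S hΔ0 hr hc hP hD hΔ hu hv hq hp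
  have g2 := m3d_2 a δ E B ω τ r c s P D Δ u v q p S hΔ0 hr hc hP hD hΔ hu hv hq hp
  have g3 := m3d_3 a δ E B ω τ r c s P D Δ u v q p S hΔ0 hr hc hP hD hΔ hu hv hq hp
  refine ⟨_, _, _, _, lam_deriv _ S τ _ _ k hk hS g0 hSd, lam_deriv _ S τ _ _ k hk hS g1 hSd, lam_deriv _ S τ _ _ k hk hS g2 hSd, lam_deriv _ S τ _ _ k hk hS g3 hSd, ?_, ?_, ?_, ?_⟩
  · have e := m3_0 a (r τ) (c τ) (s τ) (S τ) (Δ τ) δ (P τ) (D τ) E (u τ) (v τ) A B ω (q τ) (p τ) hs hS hΔ0 eS hA hB hA0 hB0 hω ep hE eu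
    rw [nn0_hom, ← add_div, e]
    simp
  · have e := m3_1 a (r τ) (c τ) (s τ) (S τ) (Δ τ) δ (P τ) (D τ) E (u τ) (v τ) A B ω (q τ) (p τ) hs hS hΔ0 eS hA hB hA0 hB0 hω ep hE eu
    rw [nn1_hom, ← add_div, e]
    simp
  · have e := m3_2 a (r τ) (c τ) (s τ) (S τ) (Δ τ) (P τ) (D τ) E (u τ) (v τ) A B ω (q τ) (p τ) hs hS hΔ0 eS hA hB hA0 hB0 hω ep hE eu
    rw [nn2_hom, ← add_div, e]
    simp
  · have e := m3_3 a (r τ) (c τ) (s τ) (S τ) (Δ τ) (P τ) (D τ) E (u τ) (v τ) A B ω (q τ) (p τ) hs hS hΔ0 eS hA hB hA0 hB0 hω ep hE eu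
    rw [nn3_hom, ← add_div, e]
    simp

lemma m1_core : ∃ d0 d1 d2 d3 : ℝ,
  HasDerivAt (fun t => ((q t)*(r t)*(u t)/(Δ t))/(k*S t)) d0 τ ∧
  HasDerivAt (fun t => ((q t)*(r t)*(P t))/(k*S t)) d1 τ ∧
  HasDerivAt (fun t => (a*(c t)*(p t)*(v t))/(k*S t)) d2 τ ∧
  HasDerivAt (fun t => (a*(c t)*(p t)*(D t))/(k*S t)) d3 τ ∧
  d0 + nn0 a (r τ) (c τ) (s τ) (S τ) (Δ τ) δ (P τ/Δ τ/S τ) (u τ/S τ) (-D τ/S τ) (v τ/S τ) ((((q τ)*(r τ)*(u τ)/(Δ τ)))/(k*S τ)) ((((q τ)*(r τ)*(P τ)))/(k*S τ)) (((a*(c τ)*(p τ)*(v τ)))/(k*S τ)) (((a*(c τ)*(p τ)*(D τ)))/(k*S τ)) = (k/S τ*((P τ)/B-a*(s τ)*(D τ)/A))*(((q τ)*(P τ)/(Δ τ))/(1*S τ)) ∧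
  d1 + nn1 a (r τ) (c τ) (s τ) (S τ) (Δ τ) δ (P τ/Δ τ/S τ) (u τ/S τ) (-D τ/S τ) (v τ/S τ) ((((q τ)*(r τ)*(u τ)/(Δ τ)))/(k*S τ)) ((((q τ)*(r τ)*(P τ)))/(k*S τ)) (((a*(c τ)*(p τ)*(v τ)))/(k*S τ)) (((a*(c τ)*(p τ)*(D τ)))/(k*S τ)) = (k/S τ*((P τ)/B-a*(s τ)*(D τ)/A))*(((q τ)*(u τ))/(1*S τ)) ∧
  d2 + nn2 a (r τ) (c τ) (s τ) (S τ) (Δ τ) (P τ/Δ τ/S τ) (u τ/S τ) (-D τ/S τ) (v τ/S τ) ((((q τ)*(r τ)*(u τ)/(Δ τ)))/(k*S τ)) ((((q τ)*(r τ)*(P τ)))/(k*S τ)) (((a*(c τ)*(p τ)*(v τ)))/(k*S τ)) (((a*(c τ)*(p τ)*(D τ)))/(k*S τ)) = (k/S τ*((P τ)/B-a*(s τ)*(D τ)/A))*((-((D τ)*(p τ)))/(1*S τ)) ∧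
  d3 + nn3 a (r τ) (c τ) (s τ) (S τ) (Δ τ) (P τ/Δ τ/S τ) (u τ/S τ) (-D τ/S τ) (v τ/S τ) ((((q τ)*(r τ)*(u τ)/(Δ τ)))/(k*S τ)) ((((q τ)*(r τ)*(P τ)))/(k*S τ)) (((a*(c τ)*(p τ)*(v τ)))/(k*S τ)) (((a*(c τ)*(p τ)*(D τ)))/(k*S τ)) = (k/S τ*((P τ)/B-a*(s τ)*(D τ)/A))*(((v τ)*(p τ))/(1*S τ)) := by
  have g0 := m1d_0 a δ E B ω τ r c s P D Δ u v q p S hΔ0 hr hc hP hD hΔ hu hv hq hp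
  have g1 := m1d_1 a δ E B ω τ r c s P D Δ u v q p S hΔ0 hr hc hP hD hΔ hu hv hq hp
  have g2 := m1d_2 a δ E B ω τ r c s P D Δ u v q p S hΔ0 hr hc hP hD hΔ hu hv hq hp
  have g3 := m1d_3 a δ E B ω τ r c s P D Δ u v q p S hΔ0 hr hc hP hD hΔ hu hv hq hp
  refine ⟨_, _, _, _, lam_deriv _ S τ _ _ k hk hS g0 hSd, lam_deriv _ S τ _ _ k hk hS g1 hSd, lam_deriv _ S τ _ _ k hk hS g2 hSd, lam_deriv _ S τ _ _ k hk hS g3 hSd, ?_, ?_, ?_, ?_⟩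
  · have e := m1_0 a (r τ) (c τ) (s τ) (S τ) (Δ τ) δ (P τ) (D τ) E (u τ) (v τ) A B ω (q τ) (p τ) hs hS hΔ0 eS hA hB hA0 hB0 hω ep hE eu
    rw [nn0_hom, ← add_div, e]
    rw [← hκ]
    field_simp
  · have e := m1_1 a (r τ) (c τ) (s τ) (S τ) (Δ τ) δ (P τ) (D τ) E (u τ) (v τ) A B ω (q τ) (p τ) hs hS hΔ0 eS hA hB hA0 hB0 hω ep hE eu
    rw [nn1_hom, ← add_div, e]
    rw [← hκ]
    field_simp
  · have e := m1_2 a (r τ) (c τ) (s τ) (S τ) (Δ τ) (P τ) (D τ) E (u τ) (v τ) A B ω (q τ) (p τ) hs hS hΔ0 eS hA hB hA0 hB0 hω ep hE eu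
    rw [nn2_hom, ← add_div, e]
    rw [← hκ]
    field_simp
  · have e := m1_3 a (r τ) (c τ) (s τ) (S τ) (Δ τ) (P τ) (D τ) E (u τ) (v τ) A B ω (q τ) (p τ) hs hS hΔ0 eS hA hB hA0 hB0 hω ep hE eu
    rw [nn3_hom, ← add_div, e]
    rw [← hκ]
    field_simp

lemma m2_core : ∃ d0 d1 d2 d3 : ℝ,
  HasDerivAt (fun t => ((q t)*(P t)/(Δ t))/(1*S t)) d0 τ ∧
  HasDerivAt (fun t => ((q t)*(u t))/(1*S t)) d1 τ ∧
  HasDerivAt (fun t => (-((D t)*(p t)))/(1*S t)) d2 τ ∧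
  HasDerivAt (fun t => ((v t)*(p t))/(1*S t)) d3 τ ∧
  d0 + nn0 a (r τ) (c τ) (s τ) (S τ) (Δ τ) δ (P τ/Δ τ/S τ) (u τ/S τ) (-D τ/S τ) (v τ/S τ) ((((q τ)*(P τ)/(Δ τ)))/(1*S τ)) ((((q τ)*(u τ)))/(1*S τ)) (((-((D τ)*(p τ))))/(1*S τ)) ((((v τ)*(p τ)))/(1*S τ)) = -((k/S τ*((P τ)/B-a*(s τ)*(D τ)/A))*(((q τ)*(r τ)*(u τ)/(Δ τ))/(k*S τ))) ∧
  d1 + nn1 a (r τ) (c τ) (s τ) (S τ) (Δ τ) δ (P τ/Δ τ/S τ) (u τ/S τ) (-D τ/S τ) (v τ/S τ) ((((q τ)*(P τ)/(Δ τ)))/(1*S τ)) ((((q τ)*(u τ)))/(1*S τ)) (((-((D τ)*(p τ))))/(1*S τ)) ((((v τ)*(p τ)))/(1*S τ)) = -((k/S τ*((P τ)/B-a*(s τ)*(D τ)/A))*(((q τ)*(r τ)*(P τ))/(k*S τ))) ∧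
  d2 + nn2 a (r τ) (c τ) (s τ) (S τ) (Δ τ) (P τ/Δ τ/S τ) (u τ/S τ) (-D τ/S τ) (v τ/S τ) ((((q τ)*(P τ)/(Δ τ)))/(1*S τ)) ((((q τ)*(u τ)))/(1*S τ)) (((-((D τ)*(p τ))))/(1*S τ)) ((((v τ)*(p τ)))/(1*S τ)) = -((k/S τ*((P τ)/B-a*(s τ)*(D τ)/A))*((a*(c τ)*(p τ)*(v τ))/(k*S τ))) ∧
  d3 + nn3 a (r τ) (c τ) (s τ) (S τ) (Δ τ) (P τ/Δ τ/S τ) (u τ/S τ) (-D τ/S τ) (v τ/S τ) ((((q τ)*(P τ)/(Δ τ)))/(1*S τ)) ((((q τ)*(u τ)))/(1*S τ)) (((-((D τ)*(p τ))))/(1*S τ)) ((((v τ)*(p τ)))/(1*S τ)) = -((k/S τ*((P τ)/B-a*(s τ)*(D τ)/A))*((a*(c τ)*(p τ)*(D τ))/(k*S τ))) := by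
  have g0 := m2d_0 a δ E B ω τ r c s P D Δ u v q p S hΔ0 hr hc hP hD hΔ hu hv hq hp
  have g1 := m2d_1 a δ E B ω τ r c s P D Δ u v q p S hΔ0 hr hc hP hD hΔ hu hv hq hp
  have g2 := m2d_2 a δ E B ω τ r c s P D Δ u v q p S hΔ0 hr hc hP hD hΔ hu hv hq hp
  have g3 := m2d_3 a δ E B ω τ r c s P D Δ u v q p S hΔ0 hr hc hP hD hΔ hu hv hq hp
  refine ⟨_, _, _, _, lam_deriv _ S τ _ _ 1 one_ne_zero hS g0 hSd, lam_deriv _ S τ _ _ 1 one_ne_zero hS g1 hSd, lam_deriv _ S τ _ _ 1 one_ne_zero hS g2 hSd, lam_deriv _ S τ _ _ 1 one_ne_zero hS g3 hSd, ?_, ?_, ?_, ?_⟩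
  · have e := m2_0 a (r τ) (c τ) (s τ) (S τ) (Δ τ) δ (P τ) (D τ) E (u τ) (v τ) A B ω (q τ) (p τ) hs hS hΔ0 eS hA hB hA0 hB0 hω ep hE eu
    rw [nn0_hom, ← add_div, e]
    field_simp
  · have e := m2_1 a (r τ) (c τ) (s τ) (S τ) (Δ τ) δ (P τ) (D τ) E (u τ) (v τ) A B ω (q τ) (p τ) hs hS hΔ0 eS hA hB hA0 hB0 hω ep hE eu
    rw [nn1_hom, ← add_div, e]
    field_simp
  · have e := m2_2 a (r τ) (c τ) (s τ) (S τ) (Δ τ) (P τ) (D τ) E (u τ) (v τ) A B ω (q τ) (p τ) hs hS hΔ0 eS hA hB hA0 hB0 hω ep hE eu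
    rw [nn2_hom, ← add_div, e]
    field_simp
  · have e := m2_3 a (r τ) (c τ) (s τ) (S τ) (Δ τ) (P τ) (D τ) E (u τ) (v τ) A B ω (q τ) (p τ) hs hS hΔ0 eS hA hB hA0 hB0 hω ep hE eu
    rw [nn3_hom, ← add_div, e]
    field_simp

end core

lemma Vf_sub (a r c s C Z l0 l1 l2 l3 m0 m1 m2 m3 : ℝ) :
    C • Vf a r c s l0 l1 l2 l3 - Z • Vf a r c s m0 m1 m2 m3 =
    Vf a r c s (C*l0-Z*m0) (C*l1-Z*m1) (C*l2-Z*m2) (C*l3-Z*m3) := by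
  ext i
  fin_cases i <;> simp [Vf] <;> ring

lemma Vf_add (a r c s C Z l0 l1 l2 l3 m0 m1 m2 m3 : ℝ) :
    C • Vf a r c s l0 l1 l2 l3 + Z • Vf a r c s m0 m1 m2 m3 =
    Vf a r c s (C*l0+Z*m0) (C*l1+Z*m1) (C*l2+Z*m2) (C*l3+Z*m3) := by
  ext i
  fin_cases i <;> simp [Vf] <;> ring

lemma nn0_lin1 (a r c s S Δ δ v0 v1 v2 v3 l0 l1 l2 l3 m0 m1 m2 m3 C Z f bb cc : ℝ)
    (hb : bb + nn0 a r c s S Δ δ v0 v1 v2 v3 l0 l1 l2 l3 = f * m0)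
    (hc : cc + nn0 a r c s S Δ δ v0 v1 v2 v3 m0 m1 m2 m3 = -(f * l0)) :
    ((-Z*f) * l0 + C * bb) - ((C*f) * m0 + Z * cc) + nn0 a r c s S Δ δ v0 v1 v2 v3 (C*l0-Z*m0) (C*l1-Z*m1) (C*l2-Z*m2) (C*l3-Z*m3) = 0 := by
  unfold nn0 at *
  linear_combination C * hb - Z * hc

lemma nn0_lin2 (a r c s S Δ δ v0 v1 v2 v3 l0 l1 l2 l3 m0 m1 m2 m3 C Z f bb cc : ℝ)
    (hb : bb + nn0 a r c s S Δ δ v0 v1 v2 v3 l0 l1 l2 l3 = f * m0)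
    (hc : cc + nn0 a r c s S Δ δ v0 v1 v2 v3 m0 m1 m2 m3 = -(f * l0)) :
    ((C*f) * l0 + Z * bb) + ((-Z*f) * m0 + C * cc) + nn0 a r c s S Δ δ v0 v1 v2 v3 (Z*l0+C*m0) (Z*l1+C*m1) (Z*l2+C*m2) (Z*l3+C*m3) = 0 := by
  unfold nn0 at *
  linear_combination Z * hb + C * hc

lemma nn1_lin1 (a r c s S Δ δ v0 v1 v2 v3 l0 l1 l2 l3 m0 m1 m2 m3 C Z f bb cc : ℝ)
    (hb : bb + nn1 a r c s S Δ δ v0 v1 v2 v3 l0 l1 l2 l3 = f * m1)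
    (hc : cc + nn1 a r c s S Δ δ v0 v1 v2 v3 m0 m1 m2 m3 = -(f * l1)) :
    ((-Z*f) * l1 + C * bb) - ((C*f) * m1 + Z * cc) + nn1 a r c s S Δ δ v0 v1 v2 v3 (C*l0-Z*m0) (C*l1-Z*m1) (C*l2-Z*m2) (C*l3-Z*m3) = 0 := by
  unfold nn1 at *
  linear_combination C * hb - Z * hc

lemma nn1_lin2 (a r c s S Δ δ v0 v1 v2 v3 l0 l1 l2 l3 m0 m1 m2 m3 C Z f bb cc : ℝ)
    (hb : bb + nn1 a r c s S Δ δ v0 v1 v2 v3 l0 l1 l2 l3 = f * m1)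
    (hc : cc + nn1 a r c s S Δ δ v0 v1 v2 v3 m0 m1 m2 m3 = -(f * l1)) :
    ((C*f) * l1 + Z * bb) + ((-Z*f) * m1 + C * cc) + nn1 a r c s S Δ δ v0 v1 v2 v3 (Z*l0+C*m0) (Z*l1+C*m1) (Z*l2+C*m2) (Z*l3+C*m3) = 0 := by
  unfold nn1 at *
  linear_combination Z * hb + C * hc

lemma nn2_lin1 (a r c s S Δ v0 v1 v2 v3 l0 l1 l2 l3 m0 m1 m2 m3 C Z f bb cc : ℝ)
    (hb : bb + nn2 a r c s S Δ v0 v1 v2 v3 l0 l1 l2 l3 = f * m2)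
    (hc : cc + nn2 a r c s S Δ v0 v1 v2 v3 m0 m1 m2 m3 = -(f * l2)) :
    ((-Z*f) * l2 + C * bb) - ((C*f) * m2 + Z * cc) + nn2 a r c s S Δ v0 v1 v2 v3 (C*l0-Z*m0) (C*l1-Z*m1) (C*l2-Z*m2) (C*l3-Z*m3) = 0 := by
  unfold nn2 at *
  linear_combination C * hb - Z * hc

lemma nn2_lin2 (a r c s S Δ v0 v1 v2 v3 l0 l1 l2 l3 m0 m1 m2 m3 C Z f bb cc : ℝ)
    (hb : bb + nn2 a r c s S Δ v0 v1 v2 v3 l0 l1 l2 l3 = f * m2)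
    (hc : cc + nn2 a r c s S Δ v0 v1 v2 v3 m0 m1 m2 m3 = -(f * l2)) :
    ((C*f) * l2 + Z * bb) + ((-Z*f) * m2 + C * cc) + nn2 a r c s S Δ v0 v1 v2 v3 (Z*l0+C*m0) (Z*l1+C*m1) (Z*l2+C*m2) (Z*l3+C*m3) = 0 := by
  unfold nn2 at *
  linear_combination Z * hb + C * hc

lemma nn3_lin1 (a r c s S Δ v0 v1 v2 v3 l0 l1 l2 l3 m0 m1 m2 m3 C Z f bb cc : ℝ)
    (hb : bb + nn3 a r c s S Δ v0 v1 v2 v3 l0 l1 l2 l3 = f * m3)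
    (hc : cc + nn3 a r c s S Δ v0 v1 v2 v3 m0 m1 m2 m3 = -(f * l3)) :
    ((-Z*f) * l3 + C * bb) - ((C*f) * m3 + Z * cc) + nn3 a r c s S Δ v0 v1 v2 v3 (C*l0-Z*m0) (C*l1-Z*m1) (C*l2-Z*m2) (C*l3-Z*m3) = 0 := by
  unfold nn3 at *
  linear_combination C * hb - Z * hc

lemma nn3_lin2 (a r c s S Δ v0 v1 v2 v3 l0 l1 l2 l3 m0 m1 m2 m3 C Z f bb cc : ℝ)
    (hb : bb + nn3 a r c s S Δ v0 v1 v2 v3 l0 l1 l2 l3 = f * m3)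
    (hc : cc + nn3 a r c s S Δ v0 v1 v2 v3 m0 m1 m2 m3 = -(f * l3)) :
    ((C*f) * l3 + Z * bb) + ((-Z*f) * m3 + C * cc) + nn3 a r c s S Δ v0 v1 v2 v3 (Z*l0+C*m0) (Z*l1+C*m1) (Z*l2+C*m2) (Z*l3+C*m3) = 0 := by
  unfold nn3 at *
  linear_combination Z * hb + C * hc

open Real in
/-- Marck's theorem: the frame (L₀, L₁, L₂, L₃) is parallel propagated along
any timelike Kerr geodesic with first integrals E, Φ, κ. -/
theorem marck_parallel_frame
    (M a E Φ κ : ℝ) (ha : 0 ≤ a) (haM : a < M)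
    (I : Set ℝ) (hIopen : IsOpen I) (hIconn : Set.OrdConnected I)
    (x : ℝ → Fin 4 → ℝ) (hx : ContDiffOn ℝ 2 x I)
    (hsin : ∀ τ ∈ I, 0 < Real.sin (x τ 2))
    (hΔ : ∀ τ ∈ I, 0 < Delk M a (x τ 1))
    (hR : ∀ τ ∈ I, 0 < Rk M a E Φ κ (x τ 1))
    (hΘ : ∀ τ ∈ I, 0 < Thk a E Φ κ (x τ 2))
    (hκ : ∀ τ ∈ I, a ^ 2 * Real.cos (x τ 2) ^ 2 < κ)
    (hvt : ∀ τ ∈ I, deriv (fun t => x t 0) τ =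
      (((x τ 1 ^ 2 + a ^ 2) ^ 2 - a ^ 2 * Delk M a (x τ 1) * sin (x τ 2) ^ 2) * E
          - 2 * M * a * x τ 1 * Φ)
        / (Sigk a (x τ 1) (x τ 2) * Delk M a (x τ 1)))
    (hvφ : ∀ τ ∈ I, deriv (fun t => x t 3) τ =
      (2 * M * a * x τ 1 * E
          + (Delk M a (x τ 1) - a ^ 2 * sin (x τ 2) ^ 2) / sin (x τ 2) ^ 2 * Φ)
        / (Sigk a (x τ 1) (x τ 2) * Delk M a (x τ 1)))
    (hvr : ∀ τ ∈ I, deriv (fun t => x t 1) τ =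
      Real.sqrt (Rk M a E Φ κ (x τ 1)) / Sigk a (x τ 1) (x τ 2))
    (hvϑ : ∀ τ ∈ I, deriv (fun t => x t 2) τ =
      Real.sqrt (Thk a E Φ κ (x τ 2)) / Sigk a (x τ 1) (x τ 2))
    (hgeo : ∀ τ ∈ I, ∀ i, deriv (deriv (fun t => x t i)) τ
      + ∑ j, ∑ k, kerrChristoffel M a i j k (x τ)
          * deriv (fun t => x t j) τ * deriv (fun t => x t k) τ = 0)
    (Φhat : ℝ → ℝ)
    (hΦhat : ∀ τ ∈ I, HasDerivAt Φhat
      (Real.sqrt κ / Sigk a (x τ 1) (x τ 2) *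
        (Pk a E Φ (x τ 1) / (x τ 1 ^ 2 + κ)
          - a * Real.sin (x τ 2) * Dk a E Φ (x τ 2)
            / (κ - a ^ 2 * Real.cos (x τ 2) ^ 2))) τ) :
    ∀ τ ∈ I,
      ParallelAt M a x (L0vec x) τ ∧
      ParallelAt M a x (L1vec M a E Φ κ x Φhat) τ ∧
      ParallelAt M a x (L2vec M a E Φ κ x Φhat) τ ∧
      ParallelAt M a x (L3vec M a E Φ κ x) τ := by
  intro τ hτ
  have hxd : ∀ i, HasDerivAt (fun t => x t i) (deriv (fun t => x t i) τ) τ := by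
    intro i
    have h1 : DifferentiableAt ℝ x τ :=
      (hx.differentiableOn (by norm_num)).differentiableAt (hIopen.mem_nhds hτ)
    exact (differentiableAt_pi.mp h1 i).hasDerivAt
  have hSpos : ∀ t ∈ I, 0 < Sigk a (x t 1) (x t 2) := by
    intro t ht
    have h0 : 0 ≤ Sigk a (x t 1) (x t 2) := by unfold Sigk; positivity
    rcases h0.lt_or_eq with h | h
    · exact h
    exfalso
    have e1 : x t 1 ^ 2 = 0 := by
      unfold Sigk at h
      nlinarith [sq_nonneg (x t 1), mul_nonneg (sq_nonneg a) (sq_nonneg (cos (x t 2)))]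
    have e2 : a ^ 2 * cos (x t 2) ^ 2 = 0 := by unfold Sigk at h; linarith
    have e1' : x t 1 = 0 := by simpa using e1
    have hR' := hR t ht
    have hΘ' := hΘ t ht
    have hΔ' := hΔ t ht
    have hs' := hsin t ht
    unfold Rk Pk Delk at hR'
    unfold Delk at hΔ'
    rw [e1'] at hR' hΔ'
    have ha2 : 0 < a^2 := by linarith
    have hc0 : cos (x t 2) ^ 2 = 0 := by
      rcases mul_eq_zero.mp e2 with h | h
      · exact absurd h ha2.ne'
      · exact h
    have hs1 : sin (x t 2) = 1 := by
      have := Real.sin_sq_add_cos_sq (x t 2)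
      nlinarith
    unfold Thk Dk at hΘ'
    rw [hs1, hc0] at hΘ'
    nlinarith [mul_pos ha2 hΘ']
  have hκpos : 0 < κ := lt_of_le_of_lt (by positivity) (hκ τ hτ)
  have hA : ∀ t ∈ I, 0 < κ - a ^ 2 * cos (x t 2) ^ 2 := fun t ht => by linarith [hκ t ht]
  have hB : ∀ t, 0 < x t 1 ^ 2 + κ := fun t => by positivity
  have hϖ : ∀ t ∈ I, 0 < piomk a κ (x t 1) (x t 2) := fun t ht => div_pos (hA t ht) (hB t)
  have hq : ∀ t ∈ I, 0 < √(piomk a κ (x t 1) (x t 2)) := fun t ht => Real.sqrt_pos.mpr (hϖ t ht)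
  have hSτ := hSpos τ hτ
  have hΔτ := hΔ τ hτ
  have hsτ := hsin τ hτ
  have hAτ := hA τ hτ
  have hBτ := hB τ
  have hqτ := hq τ hτ
  have hx1 := hxd 1
  have hx2 := hxd 2
  rw [hvr τ hτ] at hx1
  rw [hvϑ τ hτ] at hx2
  have hupos := Real.sqrt_pos.mpr (hR τ hτ)
  have hvpos := Real.sqrt_pos.mpr (hΘ τ hτ)
  have hcτ : HasDerivAt (fun t => cos (x t 2))
      (-sin (x τ 2) * √(Thk a E Φ κ (x τ 2)) / Sigk a (x τ 1) (x τ 2)) τ :=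
    hx2.cos.congr_deriv (by ring)
  have hPr : ∀ r, HasDerivAt (fun r => Pk a E Φ r) (2*r*E) r := by
    intro r
    unfold Pk
    exact ((((hasDerivAt_pow 2 r).add_const (a^2)).const_mul E).sub_const (a*Φ)).congr_deriv
      (by simp; ring)
  have hDt : HasDerivAt (fun t => Dk a E Φ t)
      (cos (x τ 2)*(2*a*E - Dk a E Φ (x τ 2)/sin (x τ 2))) (x τ 2) := by
    unfold Dk
    refine (((Real.hasDerivAt_sin _).const_mul (a*E)).sub
      ((hasDerivAt_const _ Φ).div (Real.hasDerivAt_sin _) hsτ.ne')).congr_deriv ?_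
    field_simp
    try ring
  have hPτ : HasDerivAt (fun t => Pk a E Φ (x t 1))
      ((2*(x τ 1)*E*√(Rk M a E Φ κ (x τ 1))) / Sigk a (x τ 1) (x τ 2)) τ := by
    have h := (hPr (x τ 1)).comp τ hx1
    exact h.congr_deriv (by ring)
  have hDτ : HasDerivAt (fun t => Dk a E Φ (x t 2))
      ((cos (x τ 2)*(2*a*E - Dk a E Φ (x τ 2)/sin (x τ 2))*√(Thk a E Φ κ (x τ 2)))
        / Sigk a (x τ 1) (x τ 2)) τ := by
    have h := hDt.comp τ hx2
    exact h.congr_deriv (by ring)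
  have hΔd : HasDerivAt (fun t => Delk M a (x t 1))
      ((2*x τ 1-2*M)*√(Rk M a E Φ κ (x τ 1)) / Sigk a (x τ 1) (x τ 2)) τ := by
    have h := (Delk_dr M a (x τ 1)).comp τ hx1
    exact h.congr_deriv (by ring)
  have hu : HasDerivAt (fun t => √(Rk M a E Φ κ (x t 1)))
      ((2*(x τ 1)*(Pk a E Φ (x τ 1))*E-(2*x τ 1-2*M)*(x τ 1^2+κ)/2-(x τ 1)*(Delk M a (x τ 1)))
        / Sigk a (x τ 1) (x τ 2)) τ := by
    have h1 : HasDerivAt (fun t => Rk M a E Φ κ (x t 1)) _ τ :=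
      (hPτ.pow 2).sub (hΔd.mul ((hx1.pow 2).const_add κ))
    refine (h1.sqrt (hR τ hτ).ne').congr_deriv ?_
    try simp only [Pi.pow_apply]
    push_cast
    field_simp
    try ring
  have hv : HasDerivAt (fun t => √(Thk a E Φ κ (x t 2)))
      ((a^2*sin (x τ 2)*cos (x τ 2) - Dk a E Φ (x τ 2)*(cos (x τ 2)*(2*a*E
        - Dk a E Φ (x τ 2)/sin (x τ 2)))) / Sigk a (x τ 1) (x τ 2)) τ := by
    have h1 : HasDerivAt (fun t => Thk a E Φ κ (x t 2)) _ τ :=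
      (((hcτ.pow 2).const_mul (a^2)).const_sub κ).sub (hDτ.pow 2)
    refine (h1.sqrt (hΘ τ hτ).ne').congr_deriv ?_
    push_cast
    field_simp
    try ring
  have hSd : HasDerivAt (fun t => Sigk a (x t 1) (x t 2))
      ((2*(x τ 1)*√(Rk M a E Φ κ (x τ 1))-2*a^2*sin (x τ 2)*cos (x τ 2)*√(Thk a E Φ κ (x τ 2)))
        / Sigk a (x τ 1) (x τ 2)) τ := by
    have h1 : HasDerivAt (fun t => Sigk a (x t 1) (x t 2)) _ τ :=
      (hx1.pow 2).add ((hcτ.pow 2).const_mul (a^2))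
    refine h1.congr_deriv ?_
    push_cast
    field_simp
    try ring
  obtain ⟨ω, hω⟩ : ∃ ω, ω = a^2*sin (x τ 2)*cos (x τ 2)*√(Thk a E Φ κ (x τ 2))
      /(κ - a ^ 2 * cos (x τ 2) ^ 2) - x τ 1*√(Rk M a E Φ κ (x τ 1))/(x τ 1^2+κ) := ⟨_, rfl⟩
  have hqsq : √(piomk a κ (x τ 1) (x τ 2)) ^ 2
      = (κ - a ^ 2 * cos (x τ 2) ^ 2)/(x τ 1^2+κ) := Real.sq_sqrt (hϖ τ hτ).le
  have hqd : HasDerivAt (fun t => √(piomk a κ (x t 1) (x t 2)))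
      (√(piomk a κ (x τ 1) (x τ 2))*ω / Sigk a (x τ 1) (x τ 2)) τ := by
    have h1 : HasDerivAt (fun t => piomk a κ (x t 1) (x t 2)) _ τ :=
      (((hcτ.pow 2).const_mul (a^2)).const_sub κ).div ((hx1.pow 2).add_const κ) hBτ.ne'
    refine (h1.sqrt (hϖ τ hτ).ne').congr_deriv ?_
    rw [div_eq_iff (by positivity)]
    try simp only [Pi.pow_apply]
    push_cast
    have : √(piomk a κ (x τ 1) (x τ 2)) * ω / Sigk a (x τ 1) (x τ 2) *
        (2 * √(piomk a κ (x τ 1) (x τ 2)))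
        = 2 * ω / Sigk a (x τ 1) (x τ 2) * √(piomk a κ (x τ 1) (x τ 2))^2 := by ring
    rw [this, hqsq, hω]
    have h1 := hAτ.ne'
    have h2 := hBτ.ne'
    field_simp
    try ring
  have hpd : HasDerivAt (fun t => (√(piomk a κ (x t 1) (x t 2)))⁻¹)
      (-((√(piomk a κ (x τ 1) (x τ 2)))⁻¹*ω) / Sigk a (x τ 1) (x τ 2)) τ := by
    refine (hqd.inv hqτ.ne').congr_deriv ?_
    field_simp
  have ep : (√(piomk a κ (x τ 1) (x τ 2)))⁻¹
      = √(piomk a κ (x τ 1) (x τ 2)) * (x τ 1^2+κ) / (κ - a ^ 2 * cos (x τ 2) ^ 2) := by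
    have h1 := hAτ.ne'
    have h2 := hBτ.ne'
    rw [inv_eq_iff_eq_inv, eq_comm, inv_eq_of_mul_eq_one_left]
    have : √(piomk a κ (x τ 1) (x τ 2)) * (√(piomk a κ (x τ 1) (x τ 2)) * (x τ 1^2+κ)
        / (κ - a ^ 2 * cos (x τ 2) ^ 2)) = √(piomk a κ (x τ 1) (x τ 2))^2 * (x τ 1^2+κ)
        / (κ - a ^ 2 * cos (x τ 2) ^ 2) := by ring
    rw [this, hqsq]
    field_simp
  have hcs : sin (x τ 2)^2 = 1 - cos (x τ 2)^2 := by
    linarith [Real.sin_sq_add_cos_sq (x τ 2)]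
  have hk := Real.sqrt_pos.mpr hκpos
  have hkk : √κ^2 = (κ - a ^ 2 * cos (x τ 2) ^ 2) + a^2*cos (x τ 2)^2 := by
    rw [Real.sq_sqrt hκpos.le]; ring
  have vsq : √(Thk a E Φ κ (x τ 2))^2 = Thk a E Φ κ (x τ 2) := Real.sq_sqrt (hΘ τ hτ).le
  have usq : √(Rk M a E Φ κ (x τ 1))^2 = Rk M a E Φ κ (x τ 1) := Real.sq_sqrt (hR τ hτ).le
  have eA : κ - a ^ 2 * cos (x τ 2) ^ 2 = √(Thk a E Φ κ (x τ 2))^2 + Dk a E Φ (x τ 2)^2 := by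
    rw [vsq]; unfold Thk; ring
  have eB : x τ 1^2+κ = √(Thk a E Φ κ (x τ 2))^2 + Dk a E Φ (x τ 2)^2
      + Sigk a (x τ 1) (x τ 2) := by
    rw [vsq]; unfold Thk Sigk; ring
  have eE : E * Sigk a (x τ 1) (x τ 2) = Pk a E Φ (x τ 1) - a*sin (x τ 2)*Dk a E Φ (x τ 2) := by
    unfold Sigk Pk Dk
    have h1 : Real.cos (x τ 2)^2 = 1 - sin (x τ 2)^2 := by linarith
    field_simp
    rw [h1]; ring
  have eu : √(Rk M a E Φ κ (x τ 1))^2 = Pk a E Φ (x τ 1)^2 - Delk M a (x τ 1)*(x τ 1^2+κ) := by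
    rw [usq]; unfold Rk; ring
  have hvel : ∀ j, deriv (fun t => x t j) τ =
      Vf a (x τ 1) (cos (x τ 2)) (sin (x τ 2))
        (Pk a E Φ (x τ 1)/Delk M a (x τ 1)/Sigk a (x τ 1) (x τ 2))
        (√(Rk M a E Φ κ (x τ 1))/Sigk a (x τ 1) (x τ 2))
        (-Dk a E Φ (x τ 2)/Sigk a (x τ 1) (x τ 2))
        (√(Thk a E Φ κ (x τ 2))/Sigk a (x τ 1) (x τ 2)) j := by
    have hDd : Delk M a (x τ 1) = x τ 1^2 - 2*M*x τ 1 + a^2 := rfl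
    intro j
    fin_cases j
    · refine (hvt τ hτ).trans ?_
      simp only [Vf, Pk, Dk]
      simp
      field_simp
      rw [hDd]; ring
    · exact hvr τ hτ
    · exact hvϑ τ hτ
    · refine (hvφ τ hτ).trans ?_
      simp only [Vf, Pk, Dk]
      simp
      field_simp
      rw [hDd]; ring
  have hnear : ∀ᶠ t in nhds τ, t ∈ I := hIopen.mem_nhds hτ
  have hΦd := hΦhat τ hτ
  obtain ⟨d0, d1, d2, d3, p0, p1, p2, p3, n0, n1, n2, n3⟩ := m3_core a (2*x τ 1-2*M) E
    (κ - a ^ 2 * cos (x τ 2) ^ 2) (x τ 1^2+κ) ω τ (√κ) (fun t => x t 1) (fun t => cos (x t 2))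
    (fun t => sin (x t 2)) (fun t => Pk a E Φ (x t 1)) (fun t => Dk a E Φ (x t 2))
    (fun t => Delk M a (x t 1)) (fun t => √(Rk M a E Φ κ (x t 1)))
    (fun t => √(Thk a E Φ κ (x t 2))) (fun t => √(piomk a κ (x t 1) (x t 2)))
    (fun t => (√(piomk a κ (x t 1) (x t 2)))⁻¹) (fun t => Sigk a (x t 1) (x t 2))
    hΔτ.ne' hx1 hcτ hPτ hDτ hΔd hu hv hqd hpd hSd hk.ne' hkk hsτ.ne' hSτ.ne' rfl eA eB hAτ.ne'
    hBτ.ne' hω ep eE eu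
  obtain ⟨b0, b1, b2, b3, q0, q1, q2, q3, k0, k1, k2, k3⟩ := m1_core a (2*x τ 1-2*M) E
    (κ - a ^ 2 * cos (x τ 2) ^ 2) (x τ 1^2+κ) ω τ (√κ) (fun t => x t 1) (fun t => cos (x t 2))
    (fun t => sin (x t 2)) (fun t => Pk a E Φ (x t 1)) (fun t => Dk a E Φ (x t 2))
    (fun t => Delk M a (x t 1)) (fun t => √(Rk M a E Φ κ (x t 1)))
    (fun t => √(Thk a E Φ κ (x t 2))) (fun t => √(piomk a κ (x t 1) (x t 2)))
    (fun t => (√(piomk a κ (x t 1) (x t 2)))⁻¹) (fun t => Sigk a (x t 1) (x t 2))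
    hΔτ.ne' hx1 hcτ hPτ hDτ hΔd hu hv hqd hpd hSd hk.ne' hkk hsτ.ne' hSτ.ne' rfl eA eB hAτ.ne'
    hBτ.ne' hω ep eE eu
  obtain ⟨c0, c1, c2, c3, r0, r1, r2, r3, j0, j1, j2, j3⟩ := m2_core a (2*x τ 1-2*M) E
    (κ - a ^ 2 * cos (x τ 2) ^ 2) (x τ 1^2+κ) ω τ (√κ) (fun t => x t 1) (fun t => cos (x t 2))
    (fun t => sin (x t 2)) (fun t => Pk a E Φ (x t 1)) (fun t => Dk a E Φ (x t 2))
    (fun t => Delk M a (x t 1)) (fun t => √(Rk M a E Φ κ (x t 1)))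
    (fun t => √(Thk a E Φ κ (x t 2))) (fun t => √(piomk a κ (x t 1) (x t 2)))
    (fun t => (√(piomk a κ (x t 1) (x t 2)))⁻¹) (fun t => Sigk a (x t 1) (x t 2))
    hΔτ.ne' hx1 hcτ hPτ hDτ hΔd hu hv hqd hpd hSd hk.ne' hkk hsτ.ne' hSτ.ne' rfl eA eB hAτ.ne'
    hBτ.ne' hω ep eE eu
  refine ⟨fun i => hgeo τ hτ i, ?_, ?_, ?_⟩
  · refine parallel_general M a x τ _ hSτ.ne' hΔτ.ne' hsτ.ne' _ _ _ _ _ _ _ _ _ _ _ _ hx1 hx2 hvel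
      ?_ ((hΦd.cos.mul q0).sub (hΦd.sin.mul r0)) ((hΦd.cos.mul q1).sub (hΦd.sin.mul r1))
      ((hΦd.cos.mul q2).sub (hΦd.sin.mul r2)) ((hΦd.cos.mul q3).sub (hΦd.sin.mul r3)) ?_ ?_ ?_ ?_
    · filter_upwards [hnear] with t ht
      unfold L1vec
      rw [Lt1_eq M a E Φ κ x t (hSpos t ht) (hΔ t ht) (hsin t ht).ne' hκpos (hq t ht),
        Lt2_eq M a E Φ κ x t (hSpos t ht) (hΔ t ht) (hsin t ht).ne' (hq t ht)]
      exact Vf_sub _ _ _ _ _ _ _ _ _ _ _ _ _ _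
    · exact nn0_lin1 (C := cos (Φhat τ)) (Z := sin (Φhat τ)) (hb := k0) (hc := j0)
    · exact nn1_lin1 (C := cos (Φhat τ)) (Z := sin (Φhat τ)) (hb := k1) (hc := j1)
    · exact nn2_lin1 (C := cos (Φhat τ)) (Z := sin (Φhat τ)) (hb := k2) (hc := j2)
    · exact nn3_lin1 (C := cos (Φhat τ)) (Z := sin (Φhat τ)) (hb := k3) (hc := j3)
  · refine parallel_general M a x τ _ hSτ.ne' hΔτ.ne' hsτ.ne' _ _ _ _ _ _ _ _ _ _ _ _ hx1 hx2 hvel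
      ?_ ((hΦd.sin.mul q0).add (hΦd.cos.mul r0)) ((hΦd.sin.mul q1).add (hΦd.cos.mul r1))
      ((hΦd.sin.mul q2).add (hΦd.cos.mul r2)) ((hΦd.sin.mul q3).add (hΦd.cos.mul r3)) ?_ ?_ ?_ ?_
    · filter_upwards [hnear] with t ht
      unfold L2vec
      rw [Lt1_eq M a E Φ κ x t (hSpos t ht) (hΔ t ht) (hsin t ht).ne' hκpos (hq t ht),
        Lt2_eq M a E Φ κ x t (hSpos t ht) (hΔ t ht) (hsin t ht).ne' (hq t ht)]
      exact Vf_add _ _ _ _ _ _ _ _ _ _ _ _ _ _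
    · exact nn0_lin2 (C := cos (Φhat τ)) (Z := sin (Φhat τ)) (hb := k0) (hc := j0)
    · exact nn1_lin2 (C := cos (Φhat τ)) (Z := sin (Φhat τ)) (hb := k1) (hc := j1)
    · exact nn2_lin2 (C := cos (Φhat τ)) (Z := sin (Φhat τ)) (hb := k2) (hc := j2)
    · exact nn3_lin2 (C := cos (Φhat τ)) (Z := sin (Φhat τ)) (hb := k3) (hc := j3)
  · refine parallel_general M a x τ _ hSτ.ne' hΔτ.ne' hsτ.ne' _ _ _ _ _ _ _ _ _ _ _ _ hx1 hx2 hvel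
      ?_ p0 p1 p2 p3 n0 n1 n2 n3
    filter_upwards [hnear] with t ht
    exact L3_eq M a E Φ κ x t (hSpos t ht) (hΔ t ht) (hsin t ht).ne' hκpos
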